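/- Let T be a compactly generated triangulated category with a single compact generator G, and define the generating sequence G by G^n := {Σ^{n}G} for all n ∈ ℤ. Then: (i) T is weakly co-approximable if and only if T is weakly G-approximable; (ii) T is co-approximable if and only if T is G-approximable; and the analogous equivalences hold between (weak) co-quasiapproximability and (weak) G-quasiapproximability. -/

import Mathlib

namespace GApprox

open CategoryTheory CategoryTheory.Limits CategoryTheory.Pretriangulated

universe w v u

variable (C : Type u) [Category.{v} C] [HasZeroObject C] [HasShift C ℤ]
  [Preadditive C] [∀ n : ℤ, (shiftFunctor C n).Additive] [Pretriangulated C]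
  [HasCoproducts.{v} C]

/-- The right orthogonal of a class of objects. -/
def rOrth (A : Set C) : Set C := {X | ∀ a ∈ A, ∀ f : a ⟶ X, f = 0}

/-- The left orthogonal of a class of objects. -/
def lOrth (A : Set C) : Set C := {X | ∀ a ∈ A, ∀ f : X ⟶ a, f = 0}

/-- `Hom(A, B) = 0`. -/
def homZero (A B : Set C) : Prop := ∀ a ∈ A, ∀ b ∈ B, ∀ f : a ⟶ b, f = 0

/-- The star operation `A ⋆ B`: objects `Y` admitting a distinguished triangle
`X ⟶ Y ⟶ Z ⟶ ΣX` with `X ∈ A` and `Z ∈ B`. -/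
def starSet (A B : Set C) : Set C :=
  {Y | ∃ (X Z : C) (f : X ⟶ Y) (g : Y ⟶ Z) (h : Z ⟶ X⟦(1 : ℤ)⟧),
    Triangle.mk f g h ∈ (distTriang C) ∧ X ∈ A ∧ Z ∈ B}

/-- The (strictly full) shift `Σⁿ A` of a class of objects. -/
def shiftSet (n : ℤ) (A : Set C) : Set C :=
  {X | ∃ a ∈ A, Nonempty (X ≅ (shiftFunctor C n).obj a)}

/-- An object is compact if any map to a coproduct factors through a finite subcoproduct. -/
def IsCompactObj (X : C) : Prop :=
  ∀ (α : Type v) (f : α → C) (g : X ⟶ ∐ f),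
    ∃ (s : Finset α) (h : X ⟶ ∐ (fun i : {a : α // a ∈ s} => f i.1)),
      g = h ≫ Sigma.desc (fun i => Sigma.ι f i.1)

/-- The class of compact objects `T^c`. -/
def compacts : Set C := {X | IsCompactObj C X}

/-- The category is compactly generated. -/
def CompactlyGenerated : Prop :=
  ∀ X : C, (∀ K ∈ compacts C, ∀ f : K ⟶ X, f = 0) → IsZero X

/-- Closure under direct summands (retracts), `smd`. -/
def smd (A : Set C) : Set C :=
  {X | ∃ Y ∈ A, ∃ (i : X ⟶ Y) (r : Y ⟶ X), i ≫ r = 𝟙 X}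

/-- Closure of a class of objects under finite direct sums and extensions (`coprod`). -/
inductive extClosure (U : Set C) : C → Prop
  | of {X : C} : X ∈ U → extClosure U X
  | zero {X : C} : IsZero X → extClosure U X
  | ext {X Y Z : C} (f : X ⟶ Y) (g : Y ⟶ Z) (h : Z ⟶ X⟦(1 : ℤ)⟧) :
      Triangle.mk f g h ∈ (distTriang C) → extClosure U X → extClosure U Z → extClosure U Y

/-- Closure of a class of objects under arbitrary coproducts, extensions and
direct summands. -/
inductive bigClosure (U : Set C) : C → Prop
  | of {X : C} : X ∈ U → bigClosure U X
  | zero {X : C} : IsZero X → bigClosure U X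
  | coprod {α : Type v} (f : α → C) :
      (∀ i, bigClosure U (f i)) → ∀ {X : C}, (X ≅ ∐ f) → bigClosure U X
  | ext {X Y Z : C} (f : X ⟶ Y) (g : Y ⟶ Z) (h : Z ⟶ X⟦(1 : ℤ)⟧) :
      Triangle.mk f g h ∈ (distTriang C) → bigClosure U X → bigClosure U Z → bigClosure U Y
  | retract {X Y : C} (i : X ⟶ Y) (r : Y ⟶ X) :
      i ≫ r = 𝟙 X → bigClosure U Y → bigClosure U X

/-- Closure of a class of objects under finite direct sums, `add`. -/
def addClosure (U : Set C) : Set C :=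
  {X | ∃ (n : ℕ) (f : ULift.{v} (Fin n) → C), (∀ i, f i ∈ U) ∧ Nonempty (X ≅ ∐ f)}

/-- Closure of a class of objects under arbitrary coproducts, `Add`. -/
def bigAddClosure (U : Set C) : Set C :=
  {X | ∃ (α : Type v) (f : α → C), (∀ i, f i ∈ U) ∧ Nonempty (X ≅ ∐ f)}

/-- `coprod_n(U)`. -/
def coprodPow (U : Set C) : ℕ → Set C
  | 0 => {X | IsZero X}
  | n + 1 => starSet C (addClosure C U) (coprodPow U n)

/-- `Coprod_n(U)`. -/
def coprodPowBig (U : Set C) : ℕ → Set C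
  | 0 => {X | IsZero X}
  | n + 1 => starSet C (bigAddClosure C U) (coprodPowBig U n)

/-- `G[a,b] = ∪ { G^m : a ≤ m ≤ b }`. -/
def unionIcc (G : ℤ → Set C) (a b : ℤ) : Set C := ⋃ m ∈ Set.Icc a b, G m

/-- `G(-∞,b] = ∪ { G^m : m ≤ b }`. -/
def unionIic (G : ℤ → Set C) (b : ℤ) : Set C := ⋃ m ∈ Set.Iic b, G m

/-- `G(-∞,∞) = ∪ { G^m : m ∈ ℤ }`. -/
def unionAll (G : ℤ → Set C) : Set C := ⋃ m : ℤ, G m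

/-- `G^{[a,b]} = smd(coprod(G[a,b]))`. -/
def gInt (G : ℤ → Set C) (a b : ℤ) : Set C :=
  smd C {X | extClosure C (unionIcc C G a b) X}

/-- `G^{(-∞,b]} = smd(coprod(G(-∞,b]))`. -/
def gIic (G : ℤ → Set C) (b : ℤ) : Set C :=
  smd C {X | extClosure C (unionIic C G b) X}

/-- `G^{[a,b]}_k = smd(coprod_k(G[a,b]))`. -/
def gIntPow (G : ℤ → Set C) (a b k : ℤ) : Set C :=
  smd C (coprodPow C (unionIcc C G a b) k.toNat)

/-- `Ḡ^{[a,b]}`. -/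
def gBarInt (G : ℤ → Set C) (a b : ℤ) : Set C :=
  {X | bigClosure C (unionIcc C G a b) X}

/-- `Ḡ^{(-∞,b]}`. -/
def gBarIic (G : ℤ → Set C) (b : ℤ) : Set C :=
  {X | bigClosure C (unionIic C G b) X}

/-- `Ḡ^{[a,b]}_k = smd(Coprod_k(G[a,b]))`. -/
def gBarIntPow (G : ℤ → Set C) (a b k : ℤ) : Set C :=
  smd C (coprodPowBig C (unionIcc C G a b) k.toNat)

/-- `M^G_n := G^{(-∞,-n]}`. -/
def MG (G : ℤ → Set C) (n : ℤ) : Set C := gIic C G (-n)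

/-- `R^G_n := ⊥((M^G_n)^⊥)`, orthogonals taken in the whole category. -/
def RG (G : ℤ → Set C) (n : ℤ) : Set C := lOrth C (rOrth C (MG C G n))

/-- A pre-generating sequence. -/
structure IsPreGenSeq (G : ℤ → Set C) : Prop where
  compact : ∀ i : ℤ, G i ⊆ compacts C
  generates : smd C {X | extClosure C (unionAll C G) X} = compacts C

/-- A generating sequence. -/
structure IsGenSeq (G : ℤ → Set C) extends IsPreGenSeq C G : Prop where
  shift_cond : ∀ n : ℤ,
    shiftSet C (-1) (G n) ∪ G n ∪ shiftSet C 1 (G n) ⊆ gInt C G (n - 1) (n + 1)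

/-- A finite generating sequence. -/
structure IsFinGenSeq (G : ℤ → Set C) extends IsGenSeq C G : Prop where
  finite : ∀ i : ℤ, (G i).Finite

/-- ℕ-equivalence of generating sequences. -/
def GenSeqNEquiv (G G' : ℤ → Set C) : Prop :=
  ∃ N : ℤ, 0 ≤ N ∧ (∀ n : ℤ, G' n ⊆ gInt C G (n - N) (n + N)) ∧
    ∀ n : ℤ, G n ⊆ gInt C G' (n - N) (n + N)

/-- ℕ-equivalence of (extended good) metrics. -/
def MetricNEquiv (M N : ℤ → Set C) : Prop :=
  ∃ n : ℤ, 0 ≤ n ∧ (∀ i : ℤ, M (i + n) ⊆ N i) ∧ ∀ i : ℤ, N (i + n) ⊆ M i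

/-- An extended good metric. -/
structure IsExtGoodMetric (M : ℤ → Set C) : Prop where
  zero_mem : ∀ (n : ℤ) (X : C), IsZero X → X ∈ M n
  iso_closed : ∀ (n : ℤ) ⦃X Y : C⦄, (X ≅ Y) → X ∈ M n → Y ∈ M n
  star_subset : ∀ n : ℤ, starSet C (M n) (M n) ⊆ M n
  shift_one : ∀ n : ℤ, shiftSet C 1 (M (n + 1)) ⊆ M n
  antitone : ∀ n : ℤ, M (n + 1) ⊆ M n
  shift_neg_one : ∀ n : ℤ, shiftSet C (-1) (M (n + 1)) ⊆ M n

/-- An orthogonal metric. -/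
structure IsOrthMetric (M : ℤ → Set C) extends IsExtGoodMetric C M : Prop where
  orth : ∀ n : ℤ, lOrth C (rOrth C (M n)) = M n

/-- The closure of the compacts `T̄^c := ∩ₙ T^c ⋆ Rₙ`. -/
def closCompacts (Rm : ℤ → Set C) : Set C := ⋂ n : ℤ, starSet C (compacts C) (Rm n)

/-- `(T, R, A)` is `G`-preapproximable. -/
structure IsGPreApprox (G Rm : ℤ → Set C) (A : ℤ) : Prop where
  orthMetric : IsOrthMetric C Rm
  A_pos : 0 < A
  cond0 : ∀ i : ℤ, MG C G i ⊆ ⋃ n ∈ {n : ℤ | |n| ≤ A}, shiftSet C n (MG C G (i + 1))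
  cond1 : ∀ i : ℤ, MG C G (i + A) ⊆ Rm i ∩ compacts C
  cond2 : ∀ n : ℤ, ∃ N : ℤ, ∀ i : ℤ, N ≤ i → homZero C (G n) (Rm i)

/-- There is a distinguished triangle `E ⟶ F ⟶ D ⟶ ΣE` with `E ∈ S` and `D ∈ D`. -/
def approxTriangle (F : C) (S D : Set C) : Prop :=
  ∃ (E Dd : C) (f : E ⟶ F) (g : F ⟶ Dd) (h : Dd ⟶ E⟦(1 : ℤ)⟧),
    Triangle.mk f g h ∈ (distTriang C) ∧ E ∈ S ∧ Dd ∈ D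

/-- `(T, R, A)` is weakly `G`-approximable. -/
structure IsWeakGApprox (G Rm : ℤ → Set C) (A : ℤ) extends IsGPreApprox C G Rm A : Prop where
  hom_vanish : ∀ n i : ℤ, A ≤ n + i → homZero C (G n) (Rm i)
  approx : ∀ i : ℤ, ∀ F ∈ Rm i,
    approxTriangle C F (gBarInt C G (-A - i) (A - i)) (Rm (i + 1))

/-- `(T, R, A)` is `G`-approximable. -/
structure IsGApprox (G Rm : ℤ → Set C) (A : ℤ) extends IsWeakGApprox C G Rm A : Prop where
  approx' : ∀ i : ℤ, ∀ F ∈ Rm i,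
    approxTriangle C F (gBarIntPow C G (-A - i) (A - i) A) (Rm (i + 1))

/-- `(T, R, A)` is weakly `G`-quasiapproximable. -/
structure IsWeakGQuasiApprox (G Rm : ℤ → Set C) (A : ℤ) extends IsGPreApprox C G Rm A : Prop where
  hom_vanish : ∀ n i : ℤ, A ≤ n + i → homZero C (G n) (Rm i)
  approx : ∀ i : ℤ, ∀ F ∈ Rm i ∩ closCompacts C Rm,
    approxTriangle C F (gBarInt C G (-A - i) (A - i)) (Rm (i + 1) ∩ closCompacts C Rm)

/-- `(T, R, A)` is `G`-quasiapproximable. -/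
structure IsGQuasiApprox (G Rm : ℤ → Set C) (A : ℤ) extends IsWeakGQuasiApprox C G Rm A : Prop where
  approx' : ∀ i : ℤ, ∀ F ∈ Rm i ∩ closCompacts C Rm,
    approxTriangle C F (gBarIntPow C G (-A - i) (A - i) A) (Rm (i + 1) ∩ closCompacts C Rm)

/-- The coproduct of a sequence of objects. -/
noncomputable def seqCoprod (E : ℕ → C) : C := ∐ (fun n : ULift.{v} ℕ => E n.down)

/-- The canonical inclusion into the coproduct of a sequence. -/
noncomputable def seqInj (E : ℕ → C) (n : ℕ) : E n ⟶ seqCoprod C E :=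
  Sigma.ι (fun n : ULift.{v} ℕ => E n.down) (ULift.up n)

/-- The map `1 - shift` on the coproduct of a sequence. -/
noncomputable def oneMinusShift (E : ℕ → C) (e : ∀ n, E n ⟶ E (n + 1)) :
    seqCoprod C E ⟶ seqCoprod C E :=
  Sigma.desc (fun n => seqInj C E n.down - e n.down ≫ seqInj C E (n.down + 1))

/-- `H`, equipped with `π`, `δ`, is a homotopy colimit of the sequence `E`. -/
def IsHocolim (E : ℕ → C) (e : ∀ n, E n ⟶ E (n + 1)) (H : C)
    (π : seqCoprod C E ⟶ H) (δ : H ⟶ (seqCoprod C E)⟦(1 : ℤ)⟧) : Prop :=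
  Triangle.mk (oneMinusShift C E e) π δ ∈ (distTriang C)

/-- A single compact generator. -/
def IsCompactGenerator (G₀ : C) : Prop :=
  IsCompactObj C G₀ ∧ ∀ X : C, (∀ n : ℤ, ∀ f : (shiftFunctor C n).obj G₀ ⟶ X, f = 0) → IsZero X

/-- The strictly full subcategory `{Σʲ G₀}`. -/
def singletonShift (G₀ : C) (j : ℤ) : Set C :=
  {X | Nonempty (X ≅ (shiftFunctor C j).obj G₀)}

/-- The generating sequence `Gⁿ := {Σ⁻ⁿ G₀}`. -/
def genSeqNeg (G₀ : C) (n : ℤ) : Set C := singletonShift C G₀ (-n)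

/-- The generating sequence `Gⁿ := {Σⁿ G₀}`. -/
def genSeqPos (G₀ : C) (n : ℤ) : Set C := singletonShift C G₀ n

/-- A co-t-structure `(T^{≥0}, T^{≤0}) = (U, V)`. -/
structure IsCoTStructure (U V : Set C) : Prop where
  smd_closed_ge : smd C U ⊆ U
  smd_closed_le : smd C V ⊆ V
  iso_closed_ge : ∀ ⦃X Y : C⦄, (X ≅ Y) → X ∈ U → Y ∈ U
  iso_closed_le : ∀ ⦃X Y : C⦄, (X ≅ Y) → X ∈ V → Y ∈ V
  shift_le : shiftSet C 1 V ⊆ V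
  shift_ge : U ⊆ shiftSet C 1 U
  orthogonal : homZero C U (shiftSet C 1 V)
  exists_triangle : ∀ t : C, ∃ (u v : C) (f : u ⟶ t) (g : t ⟶ v) (h : v ⟶ u⟦(1 : ℤ)⟧),
    Triangle.mk f g h ∈ (distTriang C) ∧ u ∈ U ∧ v ∈ shiftSet C 1 V

/-- `T^+_c := ∩ₙ (T^c ⋆ Σ⁻ⁿ T^{≥0})`, for the co-aisle `U = T^{≥0}`. -/
def TPlusC (U : Set C) : Set C := ⋂ n : ℤ, starSet C (compacts C) (shiftSet C (-n) U)

/-- `T` is weakly co-approximable. -/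
def WeaklyCoApproximable : Prop :=
  ∃ (G₀ : C) (A : ℤ) (U V : Set C), IsCompactGenerator C G₀ ∧ 0 < A ∧
    IsCoTStructure C U V ∧
    (shiftFunctor C (-A)).obj G₀ ∈ U ∧
    homZero C (singletonShift C G₀ A) U ∧
    ∀ F ∈ U, approxTriangle C F (gBarInt C (genSeqPos C G₀) (-A) A) (shiftSet C (-1) U)

/-- `T` is co-approximable. -/
def CoApproximable : Prop :=
  ∃ (G₀ : C) (A : ℤ) (U V : Set C), IsCompactGenerator C G₀ ∧ 0 < A ∧
    IsCoTStructure C U V ∧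
    (shiftFunctor C (-A)).obj G₀ ∈ U ∧
    homZero C (singletonShift C G₀ A) U ∧
    ∀ F ∈ U, approxTriangle C F (gBarIntPow C (genSeqPos C G₀) (-A) A A) (shiftSet C (-1) U)

/-- `T` is weakly co-quasiapproximable. -/
def WeaklyCoQuasiApproximable : Prop :=
  ∃ (G₀ : C) (A : ℤ) (U V : Set C), IsCompactGenerator C G₀ ∧ 0 < A ∧
    IsCoTStructure C U V ∧
    (shiftFunctor C (-A)).obj G₀ ∈ U ∧
    homZero C (singletonShift C G₀ A) U ∧
    ∀ F ∈ U ∩ TPlusC C U, approxTriangle C F (gBarInt C (genSeqPos C G₀) (-A) A)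
      (shiftSet C (-1) U ∩ TPlusC C U)

/-- `T` is co-quasiapproximable. -/
def CoQuasiApproximable : Prop :=
  ∃ (G₀ : C) (A : ℤ) (U V : Set C), IsCompactGenerator C G₀ ∧ 0 < A ∧
    IsCoTStructure C U V ∧
    (shiftFunctor C (-A)).obj G₀ ∈ U ∧
    homZero C (singletonShift C G₀ A) U ∧
    ∀ F ∈ U ∩ TPlusC C U, approxTriangle C F (gBarIntPow C (genSeqPos C G₀) (-A) A A)
      (shiftSet C (-1) U ∩ TPlusC C U)


section
open scoped ZeroObject
set_option linter.all false
variable {C}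


/-! ### Triangle toolkit -/

/-- The triangle `f, g, h` is distinguished. -/
abbrev DT {X Y Z : C} (f : X ⟶ Y) (g : Y ⟶ Z) (h : Z ⟶ X⟦(1 : ℤ)⟧) : Prop :=
  Triangle.mk f g h ∈ (distTriang C)

section tri
variable {X Y Z W : C} {f : X ⟶ Y} {g : Y ⟶ Z} {h : Z ⟶ X⟦(1 : ℤ)⟧}

lemma DT.rot (H : DT f g h) : DT g h (-f⟦(1 : ℤ)⟧') := rot_of_distTriang _ H

lemma DT.w12 (H : DT f g h) : f ≫ g = 0 := comp_distTriang_mor_zero₁₂ _ H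
lemma DT.w23 (H : DT f g h) : g ≫ h = 0 := comp_distTriang_mor_zero₂₃ _ H
lemma DT.w31 (H : DT f g h) : h ≫ f⟦(1 : ℤ)⟧' = 0 := comp_distTriang_mor_zero₃₁ _ H

lemma DT.y2 (H : DT f g h) (φ : Y ⟶ W) (e : f ≫ φ = 0) : ∃ ψ : Z ⟶ W, φ = g ≫ ψ :=
  Triangle.yoneda_exact₂ _ H φ e
lemma DT.y3 (H : DT f g h) (φ : Z ⟶ W) (e : g ≫ φ = 0) : ∃ ψ : X⟦(1 : ℤ)⟧ ⟶ W, φ = h ≫ ψ :=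
  Triangle.yoneda_exact₃ _ H φ e
lemma DT.y4 (H : DT f g h) (φ : X⟦(1 : ℤ)⟧ ⟶ W) (e : h ≫ φ = 0) :
    ∃ ψ : Y⟦(1 : ℤ)⟧ ⟶ W, φ = f⟦(1 : ℤ)⟧' ≫ ψ := by
  obtain ⟨ψ, hψ⟩ := H.rot.y3 φ e
  exact ⟨-ψ, by rw [hψ]; simp⟩
lemma DT.y5 (H : DT f g h) (φ : Y⟦(1 : ℤ)⟧ ⟶ W) (e : f⟦(1 : ℤ)⟧' ≫ φ = 0) :
    ∃ ψ : Z⟦(1 : ℤ)⟧ ⟶ W, φ = g⟦(1 : ℤ)⟧' ≫ ψ := by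
  obtain ⟨ψ, hψ⟩ := H.rot.y4 φ (by simp [e])
  exact ⟨ψ, hψ⟩
lemma DT.c2 (H : DT f g h) (φ : W ⟶ Y) (e : φ ≫ g = 0) : ∃ ψ : W ⟶ X, φ = ψ ≫ f :=
  Triangle.coyoneda_exact₂ _ H φ e
lemma DT.c3 (H : DT f g h) (φ : W ⟶ Z) (e : φ ≫ h = 0) : ∃ ψ : W ⟶ Y, φ = ψ ≫ g :=
  Triangle.coyoneda_exact₃ _ H φ e
lemma DT.c1 (H : DT f g h) (φ : W ⟶ X⟦(1 : ℤ)⟧) (e : φ ≫ f⟦(1 : ℤ)⟧' = 0) :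
    ∃ ψ : W ⟶ Z, φ = ψ ≫ h :=
  Triangle.coyoneda_exact₁ _ H φ e

variable {X' Y' Z' : C} {f' : X' ⟶ Y'} {g' : Y' ⟶ Z'} {h' : Z' ⟶ X'⟦(1 : ℤ)⟧}

lemma DT.m3 (H : DT f g h) (H' : DT f' g' h') (a : X ⟶ X') (b : Y ⟶ Y') (e : f ≫ b = a ≫ f') :
    ∃ c : Z ⟶ Z', g ≫ c = b ≫ g' ∧ h ≫ a⟦(1 : ℤ)⟧' = c ≫ h' :=
  complete_distinguished_triangle_morphism _ _ H H' a b e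
lemma DT.m1 (H : DT f g h) (H' : DT f' g' h') (b : Y ⟶ Y') (c : Z ⟶ Z') (e : g ≫ c = b ≫ g') :
    ∃ a : X ⟶ X', f ≫ b = a ≫ f' ∧ h ≫ a⟦(1 : ℤ)⟧' = c ≫ h' :=
  complete_distinguished_triangle_morphism₁ _ _ H H' b c e
lemma DT.m2 (H : DT f g h) (H' : DT f' g' h') (a : X ⟶ X') (c : Z ⟶ Z')
    (e : h ≫ a⟦(1 : ℤ)⟧' = c ≫ h') :
    ∃ b : Y ⟶ Y', f ≫ b = a ≫ f' ∧ g ≫ c = b ≫ g' :=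
  complete_distinguished_triangle_morphism₂ _ _ H H' a c e

lemma DT.iso (H : DT f g h) (a : X' ≅ X) (b : Y' ≅ Y) (c : Z' ≅ Z)
    (e1 : f' ≫ b.hom = a.hom ≫ f) (e2 : g' ≫ c.hom = b.hom ≫ g)
    (e3 : h' ≫ a.hom⟦(1 : ℤ)⟧' = c.hom ≫ h) : DT f' g' h' :=
  isomorphic_distinguished _ H _ (Triangle.isoMk _ _ a b c e1 e2 e3)

/-- Replace the middle object of a distinguished triangle by an isomorphic one. -/
lemma DT.iso2 (H : DT f g h) (e : Y ≅ Y') : DT (f ≫ e.hom) (e.inv ≫ g) h :=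
  H.iso (Iso.refl _) e.symm (Iso.refl _) (by simp) (by simp) (by simp)

lemma DT.iso3 (H : DT f g h) (e : Z ≅ Z') : DT f (g ≫ e.hom) (e.inv ≫ h) :=
  H.iso (Iso.refl _) (Iso.refl _) e.symm (by simp) (by simp) (by simp)

lemma DT.iso1 (H : DT f g h) (e : X ≅ X') : DT (e.inv ≫ f) g (h ≫ e.hom⟦(1 : ℤ)⟧') :=
  H.iso e.symm (Iso.refl _) (Iso.refl _) (by simp) (by simp)
    (by simp [← Functor.map_comp])

lemma DT.shift (H : DT f g h) (n : ℤ) :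
    ∃ (f' : X⟦n⟧ ⟶ Y⟦n⟧) (g' : Y⟦n⟧ ⟶ Z⟦n⟧) (h' : Z⟦n⟧ ⟶ X⟦n⟧⟦(1 : ℤ)⟧), DT f' g' h' :=
  ⟨_, _, _, Triangle.shift_distinguished _ H n⟩

lemma DT.invrot (H : DT f g h) :
    ∃ (a : Z⟦(-1 : ℤ)⟧ ⟶ X) (c : Y ⟶ Z⟦(-1 : ℤ)⟧⟦(1 : ℤ)⟧), DT a f c :=
  ⟨_, _, inv_rot_of_distTriang _ H⟩

end tri

lemma dt_id_left (X : C) : DT (𝟙 X) (0 : X ⟶ 0) 0 := contractible_distinguished X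
lemma dt_id_right (X : C) : DT (0 : 0 ⟶ X) (𝟙 X) 0 := contractible_distinguished₁ X

lemma dt_biprod (X Y : C) : DT (biprod.inl : X ⟶ X ⊞ Y) biprod.snd 0 :=
  binaryBiproductTriangle_distinguished X Y

/-! ### Vanishing of Hom -/

/-- `Hom(X, Y) = 0`. -/
def HZ (X Y : C) : Prop := ∀ f : X ⟶ Y, f = 0

lemma HZ.iso_left {X X' Y : C} (h : HZ X Y) (e : X' ≅ X) : HZ X' Y := fun f => by
  have := h (e.inv ≫ f)
  rw [← Category.id_comp f, ← e.hom_inv_id, Category.assoc, this, comp_zero]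

lemma HZ.iso_right {X Y Y' : C} (h : HZ X Y) (e : Y' ≅ Y) : HZ X Y' := fun f => by
  have := h (f ≫ e.hom)
  rw [← Category.comp_id f, ← e.hom_inv_id, ← Category.assoc, this, zero_comp]

lemma hz_shift_iff {X Y : C} (n : ℤ) : HZ (X⟦n⟧) (Y⟦n⟧) ↔ HZ X Y := by
  constructor
  · intro h f
    apply (shiftFunctor C n).map_injective
    rw [h ((shiftFunctor C n).map f), Functor.map_zero]
  · intro h f
    rw [← (shiftFunctor C n).map_preimage f, h ((shiftFunctor C n).preimage f), Functor.map_zero]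

/-- `X⟦a⟧⟦b⟧ ≅ X⟦c⟧` when `a + b = c`. -/
noncomputable def shIso (X : C) (a b c : ℤ) (h : a + b = c) : X⟦a⟧⟦b⟧ ≅ X⟦c⟧ :=
  ((shiftFunctorAdd' C a b c h).app X).symm

noncomputable def shIso0 (X : C) (a b : ℤ) (h : a + b = 0) : X⟦a⟧⟦b⟧ ≅ X :=
  shIso X a b 0 h ≪≫ (shiftFunctorZero C ℤ).app X

lemma hz_shift {X Y : C} (a b c d : ℤ) (h : HZ (X⟦a⟧) (Y⟦b⟧)) (e : a - b = c - d) :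
    HZ (X⟦c⟧) (Y⟦d⟧) := by
  have := (hz_shift_iff (c - a)).2 h
  exact (this.iso_left (shIso X a (c - a) c (by lia)).symm).iso_right
    (shIso Y b (c - a) d (by lia)).symm

lemma hz_shift_l {X Y : C} (a c d : ℤ) (h : HZ (X⟦a⟧) Y) (e : a = c - d) :
    HZ (X⟦c⟧) (Y⟦d⟧) :=
  hz_shift a 0 c d (h.iso_right ((shiftFunctorZero C ℤ).app Y)) (by lia)

lemma hz_shift_l' {X Y : C} (a c d : ℤ) (h : HZ (X⟦c⟧) (Y⟦d⟧)) (e : a = c - d) :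
    HZ (X⟦a⟧) Y :=
  (hz_shift c d a 0 h (by lia)).iso_right ((shiftFunctorZero C ℤ).app Y).symm

lemma hz_shift_r {X Y : C} (b c d : ℤ) (h : HZ X (Y⟦b⟧)) (e : -b = c - d) :
    HZ (X⟦c⟧) (Y⟦d⟧) :=
  hz_shift 0 b c d (h.iso_left ((shiftFunctorZero C ℤ).app X)) (by lia)

lemma hz_shift_r' {X Y : C} (b c d : ℤ) (h : HZ (X⟦c⟧) (Y⟦d⟧)) (e : -b = c - d) :
    HZ X (Y⟦b⟧) :=
  (hz_shift c d 0 b h (by lia)).iso_left ((shiftFunctorZero C ℤ).app X).symm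

lemma HZ.retract {X Y K : C} (h : HZ Y K) (i : X ⟶ Y) (r : Y ⟶ X) (e : i ≫ r = 𝟙 X) :
    HZ X K := fun f => by
  rw [← Category.id_comp f, ← e, Category.assoc, h (r ≫ f), comp_zero]

lemma HZ.ext {X Y Z K : C} {f : X ⟶ Y} {g : Y ⟶ Z} {h : Z ⟶ X⟦(1 : ℤ)⟧} (H : DT f g h)
    (hX : HZ X K) (hZ : HZ Z K) : HZ Y K := fun φ => by
  obtain ⟨ψ, rfl⟩ := H.y2 φ (hX _)
  rw [hZ ψ, comp_zero]

lemma HZ.ext_right {X Y Z K : C} {f : X ⟶ Y} {g : Y ⟶ Z} {h : Z ⟶ X⟦(1 : ℤ)⟧} (H : DT f g h)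
    (hX : HZ K X) (hZ : HZ K Z) : HZ K Y := fun φ => by
  obtain ⟨ψ, rfl⟩ := H.c2 φ (hZ _)
  rw [hX ψ, zero_comp]

lemma hz_zero_left {X K : C} (h : IsZero X) : HZ X K := fun _ => h.eq_of_src _ _

lemma hz_coprod {α : Type v} (F : α → C) {K : C} (h : ∀ i, HZ (F i) K) : HZ (∐ F) K := fun φ => by
  apply Sigma.hom_ext
  intro i
  rw [h i (Sigma.ι F i ≫ φ), comp_zero]

/-! ### Maps whose cone is left orthogonal to `w` -/

def Good {X Y : C} (a : X ⟶ Y) (w : C) : Prop :=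
  (∀ φ : Y ⟶ w, a ≫ φ = 0 → φ = 0) ∧
    ∀ ψ : X⟦(1 : ℤ)⟧ ⟶ w, ∃ ψ' : Y⟦(1 : ℤ)⟧ ⟶ w, ψ = a⟦(1 : ℤ)⟧' ≫ ψ'

lemma good_iff {X Y D w : C} {a : X ⟶ Y} {g : Y ⟶ D} {h : D ⟶ X⟦(1 : ℤ)⟧} (H : DT a g h) :
    Good a w ↔ HZ D w := by
  constructor
  · rintro ⟨h1, h2⟩ f
    obtain ⟨ψ, rfl⟩ := H.y3 f (h1 _ (by rw [← Category.assoc, H.w12, zero_comp]))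
    obtain ⟨ψ', rfl⟩ := h2 ψ
    rw [← Category.assoc, H.w31, zero_comp]
  · intro hz
    refine ⟨fun φ hφ => ?_, fun ψ => H.y4 ψ (hz _)⟩
    obtain ⟨ψ, rfl⟩ := H.y2 φ hφ
    rw [hz ψ, comp_zero]

lemma good_id (X w : C) : Good (𝟙 X) w :=
  (good_iff (dt_id_left X)).2 (hz_zero_left (isZero_zero C))

lemma good3 {X Y Z X' Y' Z' w : C} {f : X ⟶ Y} {g : Y ⟶ Z} {h : Z ⟶ X⟦(1 : ℤ)⟧}
    {f' : X' ⟶ Y'} {g' : Y' ⟶ Z'} {h' : Z' ⟶ X'⟦(1 : ℤ)⟧} (H : DT f g h) (H' : DT f' g' h')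
    {a : X ⟶ X'} {b : Y ⟶ Y'} {c : Z ⟶ Z'} (e1 : f ≫ b = a ≫ f') (e2 : g ≫ c = b ≫ g')
    (e3 : h ≫ a⟦(1 : ℤ)⟧' = c ≫ h') (ga : Good a w) (gc : Good c w) : Good b w := by
  constructor
  · intro φ hφ
    have h1 : f' ≫ φ = 0 := ga.1 _ (by rw [← Category.assoc, ← e1, Category.assoc, hφ, comp_zero])
    obtain ⟨θ, rfl⟩ := H'.y2 φ h1
    obtain ⟨ψ, hψ⟩ := H.y3 (c ≫ θ) (by rw [← Category.assoc, e2, Category.assoc, hφ])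
    obtain ⟨ψ', rfl⟩ := ga.2 ψ
    have h2 : θ - h' ≫ ψ' = 0 := gc.1 _ (by
      rw [Preadditive.comp_sub, hψ, ← Category.assoc, e3, Category.assoc, sub_self])
    rw [sub_eq_zero.1 h2, ← Category.assoc, H'.w23, zero_comp]
  · intro ψ
    obtain ⟨α, hα⟩ := ga.2 (f⟦(1 : ℤ)⟧' ≫ ψ)
    have h1 : h' ≫ α = 0 := gc.1 _ (by
      rw [← Category.assoc, ← e3, Category.assoc, ← hα, ← Category.assoc, H.w31, zero_comp])
    obtain ⟨β, rfl⟩ := H'.y4 α h1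
    obtain ⟨γ, hγ⟩ := H.y5 (ψ - b⟦(1 : ℤ)⟧' ≫ β) (by
      rw [Preadditive.comp_sub, hα, ← Category.assoc, ← Category.assoc, ← Functor.map_comp,
        ← Functor.map_comp, e1, sub_self])
    obtain ⟨γ', rfl⟩ := gc.2 γ
    refine ⟨β + g'⟦(1 : ℤ)⟧' ≫ γ', ?_⟩
    rw [Preadditive.comp_add, ← Category.assoc, ← Functor.map_comp, ← e2, Functor.map_comp,
      Category.assoc, ← hγ]
    abel



/-! ### Coproducts and compact objects -/

/-- The shift commutes with coproducts. -/
noncomputable def sigmaShift {α : Type v} (F : α → C) (n : ℤ) :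
    (∐ fun i => (F i)⟦n⟧) ≅ (∐ F)⟦n⟧ :=
  asIso (sigmaComparison (shiftFunctor C n) F)

lemma ι_sigmaShift {α : Type v} (F : α → C) (n : ℤ) (i : α) :
    Sigma.ι (fun i => (F i)⟦n⟧) i ≫ (sigmaShift F n).hom = (Sigma.ι F i)⟦n⟧' :=
  ι_comp_sigmaComparison (shiftFunctor C n) F i

open Classical in
/-- The idempotent of a coproduct attached to a finite set of indices. -/
noncomputable def pr {α : Type v} (F : α → C) (s : Finset α) : ∐ F ⟶ ∐ F :=
  Sigma.desc fun i => if i ∈ s then Sigma.ι F i else 0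

lemma ι_pr_mem {α : Type v} (F : α → C) (s : Finset α) (i : α) (h : i ∈ s) :
    Sigma.ι F i ≫ pr F s = Sigma.ι F i := by simp [pr, h]

lemma ι_pr_not_mem {α : Type v} (F : α → C) (s : Finset α) (i : α) (h : i ∉ s) :
    Sigma.ι F i ≫ pr F s = 0 := by simp [pr, h]

lemma pr_pr {α : Type v} (F : α → C) (s t : Finset α) (h : s ⊆ t) : pr F s ≫ pr F t = pr F s := by
  apply Sigma.hom_ext
  intro i
  by_cases hi : i ∈ s
  · rw [← Category.assoc, ι_pr_mem F s i hi, ι_pr_mem F t i (h hi)]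
  · rw [← Category.assoc, ι_pr_not_mem F s i hi, zero_comp]

open Classical in
lemma pr_eq_sum {α : Type v} (F : α → C) (s : Finset α) :
    pr F s = ∑ i ∈ s, Sigma.π F i ≫ Sigma.ι F i := by
  apply Sigma.hom_ext
  intro j
  rw [Preadditive.comp_sum]
  by_cases hj : j ∈ s
  · rw [ι_pr_mem F s j hj, Finset.sum_eq_single j]
    · rw [← Category.assoc, Sigma.ι_π_eq_id, Category.id_comp]
    · intro i _ hi
      rw [← Category.assoc, Sigma.ι_π_of_ne F (Ne.symm hi), zero_comp]
    · intro h; exact absurd hj h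
  · rw [ι_pr_not_mem F s j hj]
    symm
    apply Finset.sum_eq_zero
    intro i hi
    rw [← Category.assoc, Sigma.ι_π_of_ne F (by rintro rfl; exact hj hi), zero_comp]

lemma compact_iff (X : C) : IsCompactObj C X ↔
    ∀ (α : Type v) (F : α → C) (g : X ⟶ ∐ F), ∃ s : Finset α, g ≫ pr F s = g := by
  constructor
  · intro h α F g
    obtain ⟨s, k, rfl⟩ := h α F g
    refine ⟨s, ?_⟩
    rw [Category.assoc]
    congr 1
    apply Sigma.hom_ext
    rintro ⟨i, hi⟩
    simp [ι_pr_mem F s i hi]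
  · intro h α F g
    obtain ⟨s, hs⟩ := h α F g
    classical
    refine ⟨s, g ≫ Sigma.desc fun i =>
      if hi : i ∈ s then Sigma.ι (fun i : {a : α // a ∈ s} => F i.1) ⟨i, hi⟩ else 0, ?_⟩
    conv_lhs => rw [← hs]
    rw [Category.assoc]
    congr 1
    apply Sigma.hom_ext
    intro i
    by_cases hi : i ∈ s
    · rw [ι_pr_mem F s i hi]; simp [hi]
    · rw [ι_pr_not_mem F s i hi]; simp [hi]

lemma compact_zero {X : C} (h : IsZero X) : IsCompactObj C X := by
  rw [compact_iff]
  intro α F g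
  exact ⟨∅, h.eq_of_src _ _⟩

lemma compact_retract {X Y : C} (h : IsCompactObj C Y) (i : X ⟶ Y) (r : Y ⟶ X)
    (e : i ≫ r = 𝟙 X) : IsCompactObj C X := by
  rw [compact_iff] at h ⊢
  intro α F g
  obtain ⟨s, hs⟩ := h α F (r ≫ g)
  refine ⟨s, ?_⟩
  have : g = i ≫ r ≫ g := by rw [← Category.assoc, e, Category.id_comp]
  rw [this]
  simp only [Category.assoc] at hs ⊢
  rw [hs]

lemma compact_iso {X Y : C} (h : IsCompactObj C Y) (e : X ≅ Y) : IsCompactObj C X :=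
  compact_retract h e.hom e.inv e.hom_inv_id

lemma compact_ext {X Y Z : C} {f : X ⟶ Y} {g : Y ⟶ Z} {h : Z ⟶ X⟦(1 : ℤ)⟧} (H : DT f g h)
    (hX : IsCompactObj C X) (hZ : IsCompactObj C Z) : IsCompactObj C Y := by
  rw [compact_iff] at hX hZ ⊢
  intro α F x
  obtain ⟨s, hs⟩ := hX α F (f ≫ x)
  obtain ⟨k, hk⟩ := H.y2 (x - x ≫ pr F s) (by
    rw [Preadditive.comp_sub, ← Category.assoc, hs, sub_self])
  obtain ⟨t, ht⟩ := hZ α F k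
  classical
  refine ⟨s ∪ t, ?_⟩
  have hx : x = x ≫ pr F s + g ≫ k ≫ pr F t := by rw [ht, ← hk]; abel
  conv_lhs => rw [hx]
  rw [Preadditive.add_comp, Category.assoc, Category.assoc, Category.assoc,
    pr_pr F s _ Finset.subset_union_left, pr_pr F t _ Finset.subset_union_right, ← hx]

lemma compact_shift {X : C} (h : IsCompactObj C X) (n : ℤ) : IsCompactObj C (X⟦n⟧) := by
  rw [compact_iff] at h ⊢
  intro α F g
  let F' : α → C := fun i => (F i)⟦-n⟧
  let e := shIso0 X n (-n) (by lia)
  obtain ⟨s, hs⟩ := h α F' (e.inv ≫ g⟦-n⟧' ≫ (sigmaShift F (-n)).inv)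
  refine ⟨s, ?_⟩
  apply (shiftFunctor C (-n)).map_injective
  have key : (sigmaShift F (-n)).inv ≫ pr F' s = (pr F s)⟦-n⟧' ≫ (sigmaShift F (-n)).inv := by
    rw [Iso.inv_comp_eq, ← Category.assoc, Iso.eq_comp_inv]
    apply Sigma.hom_ext
    intro i
    rw [← Category.assoc, ← Category.assoc, ι_sigmaShift]
    by_cases hi : i ∈ s
    · rw [ι_pr_mem F' s i hi, ι_sigmaShift, ← Functor.map_comp, ι_pr_mem F s i hi]
    · rw [ι_pr_not_mem F' s i hi, ← Functor.map_comp, ι_pr_not_mem F s i hi, zero_comp,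
        Functor.map_zero]
  rw [Category.assoc, Category.assoc, cancel_epi, key, ← Category.assoc, cancel_mono] at hs
  rw [Functor.map_comp, hs]

lemma compact_fiber {X Y Z : C} {f : X ⟶ Y} {g : Y ⟶ Z} {h : Z ⟶ X⟦(1 : ℤ)⟧} (H : DT f g h)
    (hY : IsCompactObj C Y) (hZ : IsCompactObj C Z) : IsCompactObj C X := by
  obtain ⟨a, c, H'⟩ := H.invrot
  exact compact_ext H' (compact_shift hZ _) hY

/-! ### Closures -/

lemma extClosure_iso {U : Set C} {X Y : C} (e : X ≅ Y) (h : extClosure C U X) :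
    extClosure C U Y :=
  extClosure.ext _ _ _ ((dt_id_right X).iso2 e) (extClosure.zero (isZero_zero C)) h

lemma extClosure_mono {U U' : Set C} (hU : ∀ u ∈ U, extClosure C U' u) {X : C}
    (h : extClosure C U X) : extClosure C U' X := by
  induction h with
  | of h => exact hU _ h
  | zero h => exact extClosure.zero h
  | ext f g k H _ _ h1 h2 => exact extClosure.ext f g k H h1 h2

lemma isZero_shift {X : C} (h : IsZero X) (n : ℤ) : IsZero (X⟦n⟧) :=
  (shiftFunctor C n).map_isZero h

lemma extClosure_shift {U U' : Set C} (n : ℤ) (hU : ∀ u ∈ U, extClosure C U' (u⟦n⟧)) {X : C}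
    (h : extClosure C U X) : extClosure C U' (X⟦n⟧) := by
  induction h with
  | of h => exact hU _ h
  | zero h => exact extClosure.zero (isZero_shift h n)
  | ext f g k H _ _ h1 h2 =>
    obtain ⟨f', g', k', H'⟩ := DT.shift H n
    exact extClosure.ext f' g' k' H' h1 h2

lemma bigClosure_iso {U : Set C} {X Y : C} (e : X ≅ Y) (h : bigClosure C U X) :
    bigClosure C U Y :=
  bigClosure.retract e.inv e.hom e.inv_hom_id h

lemma bigClosure_mono {U U' : Set C} (hU : ∀ u ∈ U, bigClosure C U' u) {X : C}
    (h : bigClosure C U X) : bigClosure C U' X := by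
  induction h with
  | of h => exact hU _ h
  | zero h => exact bigClosure.zero h
  | coprod f _ e h => exact bigClosure.coprod f h e
  | ext f g k H _ _ h1 h2 => exact bigClosure.ext f g k H h1 h2
  | retract i r e _ h => exact bigClosure.retract i r e h

lemma bigClosure_shift {U U' : Set C} (n : ℤ) (hU : ∀ u ∈ U, bigClosure C U' (u⟦n⟧)) {X : C}
    (h : bigClosure C U X) : bigClosure C U' (X⟦n⟧) := by
  induction h with
  | of h => exact hU _ h
  | zero h => exact bigClosure.zero (isZero_shift h n)
  | coprod f _ e h =>
    exact bigClosure.coprod (fun i => (f i)⟦n⟧) h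
      ((shiftFunctor C n).mapIso e ≪≫ (sigmaShift f n).symm)
  | ext f g k H _ _ h1 h2 =>
    obtain ⟨f', g', k', H'⟩ := DT.shift H n
    exact bigClosure.ext f' g' k' H' h1 h2
  | retract i r e _ h =>
    exact bigClosure.retract (i⟦n⟧') (r⟦n⟧') (by
      rw [← Functor.map_comp, e, CategoryTheory.Functor.map_id]) h

lemma ext_le_big {U : Set C} {X : C} (h : extClosure C U X) : bigClosure C U X := by
  induction h with
  | of h => exact bigClosure.of h
  | zero h => exact bigClosure.zero h
  | ext f g k H _ _ h1 h2 => exact bigClosure.ext f g k H h1 h2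

lemma smdExt_le_big {U : Set C} {X : C} (h : X ∈ smd C {X | extClosure C U X}) :
    bigClosure C U X := by
  obtain ⟨Y, hY, i, r, e⟩ := h
  exact bigClosure.retract i r e (ext_le_big hY)

lemma bigClosure_hz {U : Set C} {K : C} (hU : ∀ u ∈ U, HZ u K) {X : C}
    (h : bigClosure C U X) : HZ X K := by
  induction h with
  | of h => exact hU _ h
  | zero h => exact hz_zero_left h
  | coprod f _ e h => exact (hz_coprod f h).iso_left e
  | ext f g k H _ _ h1 h2 => exact HZ.ext H h1 h2
  | retract i r e _ h => exact h.retract i r e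

lemma coprodPowBig_le_big {U : Set C} (k : ℕ) {X : C} (h : X ∈ coprodPowBig C U k) :
    bigClosure C U X := by
  induction k generalizing X with
  | zero => exact bigClosure.zero h
  | succ k ih =>
    obtain ⟨A, B, f, g, t, H, ⟨α, F, hF, ⟨e⟩⟩, hB⟩ := h
    exact bigClosure.ext f g t H (bigClosure.coprod F (fun i => bigClosure.of (hF i)) e) (ih hB)

/-! ### Compact maps into extensions of coproducts factor through finite objects -/

/-- `g` factors through an object of `coprod(V)`. -/
def FF (V : Set C) {X Y : C} (g : X ⟶ Y) : Prop :=
  ∃ (K : C) (a : X ⟶ K) (b : K ⟶ Y), extClosure C V K ∧ g = a ≫ b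

lemma FF.add {V : Set C} {X Y : C} {g g' : X ⟶ Y} (h : FF V g) (h' : FF V g') :
    FF V (g + g') := by
  obtain ⟨K, a, b, hK, rfl⟩ := h
  obtain ⟨K', a', b', hK', rfl⟩ := h'
  exact ⟨K ⊞ K', biprod.lift a a', biprod.desc b b',
    extClosure.ext _ _ _ (dt_biprod K K') hK hK', by simp⟩

lemma FF.zero {V : Set C} {X Y : C} : FF V (0 : X ⟶ Y) :=
  ⟨0, 0, 0, extClosure.zero (isZero_zero C), by simp⟩

lemma FF.comp {V : Set C} {X Y Z : C} {g : X ⟶ Y} (h : FF V g) (k : Y ⟶ Z) : FF V (g ≫ k) := by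
  obtain ⟨K, a, b, hK, rfl⟩ := h
  exact ⟨K, a, b ≫ k, hK, by simp⟩

lemma FF.precomp {V : Set C} {X Y Z : C} {g : X ⟶ Y} (h : FF V g) (k : Z ⟶ X) :
    FF V (k ≫ g) := by
  obtain ⟨K, a, b, hK, rfl⟩ := h
  exact ⟨K, k ≫ a, b, hK, by simp⟩

lemma extClosure_compact {V : Set C} (hV : ∀ u ∈ V, IsCompactObj C u) {X : C}
    (h : extClosure C V X) : IsCompactObj C X := by
  induction h with
  | of h => exact hV _ h
  | zero h => exact compact_zero h
  | ext f g k H _ _ h1 h2 => exact compact_ext H h1 h2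

lemma FF_ext {V : Set C} (hV : ∀ u ∈ V, IsCompactObj C u) {Y1 Y Y2 : C} {f : Y1 ⟶ Y}
    {g : Y ⟶ Y2} {h : Y2 ⟶ Y1⟦(1 : ℤ)⟧} (H : DT f g h)
    (h1 : ∀ X, IsCompactObj C X → ∀ x : X ⟶ Y1, FF V x)
    (h2 : ∀ X, IsCompactObj C X → ∀ x : X ⟶ Y2, FF V x) :
    ∀ X, IsCompactObj C X → ∀ x : X ⟶ Y, FF V x := by
  intro X hX x
  obtain ⟨Z', a, b, hZ', hab⟩ := h2 X hX (x ≫ g)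
  obtain ⟨W, i, δ, HW⟩ := distinguished_cocone_triangle₁ a
  obtain ⟨w, hw1, hw2⟩ := DT.m1 HW H x b hab.symm
  obtain ⟨K1, c, d, hK1, rfl⟩ := h1 W (compact_fiber HW hX (extClosure_compact hV hZ')) w
  obtain ⟨K, p, q, HK⟩ := distinguished_cocone_triangle₂ (δ ≫ c⟦(1 : ℤ)⟧')
  obtain ⟨β, _, hβ⟩ := DT.m2 HK H d b (by
    rw [← hw2, Functor.map_comp, Category.assoc])
  obtain ⟨γ, _, hγ⟩ := DT.m2 HW HK c (𝟙 Z') (by simp)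
  obtain ⟨z, hz⟩ := H.c2 (x - γ ≫ β) (by
    rw [Preadditive.sub_comp, Category.assoc, ← hβ, ← Category.assoc γ, ← hγ, hab]
    simp)
  have hx : x = γ ≫ β + z ≫ f := by rw [← hz]; abel
  rw [hx]
  exact FF.add ⟨K, γ, β, extClosure.ext _ _ _ HK hK1 hZ', rfl⟩ ((h1 X hX z).comp f)

lemma FF_big {V : Set C} (hV : ∀ u ∈ V, IsCompactObj C u) {Y : C} (hY : bigClosure C V Y) :
    ∀ X, IsCompactObj C X → ∀ x : X ⟶ Y, FF V x := by
  induction hY with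
  | of h => exact fun X _ x => ⟨_, x, 𝟙 _, extClosure.of h, by simp⟩
  | zero h => exact fun X _ x => by rw [h.eq_of_tgt x 0]; exact FF.zero
  | coprod F _ e ih =>
    intro X hX x
    obtain ⟨s, hs⟩ := (compact_iff X).1 hX _ F (x ≫ e.hom)
    classical
    have hx : x = (∑ i ∈ s, (x ≫ e.hom ≫ Sigma.π F i) ≫ Sigma.ι F i) ≫ e.inv := by
      rw [Iso.eq_comp_inv, ← hs, pr_eq_sum, Preadditive.comp_sum]
      apply Finset.sum_congr rfl
      intro i _
      simp only [Category.assoc]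
    have key : ∀ t : Finset _, FF V (∑ i ∈ t, (x ≫ e.hom ≫ Sigma.π F i) ≫ Sigma.ι F i) := by
      intro t
      induction t using Finset.induction_on with
      | empty => simpa using FF.zero
      | insert i s hi IH =>
        rw [Finset.sum_insert hi]
        exact FF.add ((ih i X hX _).comp _) IH
    rw [hx]
    exact (key s).comp _
  | ext f g k H _ _ h1 h2 => exact FF_ext hV H h1 h2
  | retract i r e _ ih =>
    intro X hX x
    have : x = (x ≫ i) ≫ r := by rw [Category.assoc, e, Category.comp_id]
    rw [this]
    exact (ih X hX _).comp r



/-! ### Ghost maps -/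

/-- Maps which are killed by precomposition with maps from objects of `U`. -/
def ghost (U : Set C) {X Y : C} (g : X ⟶ Y) : Prop := ∀ u ∈ U, ∀ x : u ⟶ X, x ≫ g = 0

/-- Composites of (at least) `k` ghosts. -/
def GC (U : Set C) : ℕ → ∀ {X Y : C}, (X ⟶ Y) → Prop
  | 0, _, _, _ => True
  | k + 1, X, Y, f => ∃ (Z : C) (g : X ⟶ Z) (h : Z ⟶ Y), ghost U g ∧ GC U k h ∧ f = g ≫ h

lemma ghost.precomp {U : Set C} {W X Y : C} {g : X ⟶ Y} (h : ghost U g) (a : W ⟶ X) :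
    ghost U (a ≫ g) := fun u hu x => by rw [← Category.assoc]; exact h u hu _

lemma ghost.comp {U : Set C} {W X Y : C} {g : X ⟶ Y} (h : ghost U g) (a : Y ⟶ W) :
    ghost U (g ≫ a) := fun u hu x => by rw [← Category.assoc, h u hu, zero_comp]

lemma GC.precomp {U : Set C} : ∀ {k : ℕ} {W X Y : C} {g : X ⟶ Y} (_ : GC U k g) (a : W ⟶ X),
    GC U k (a ≫ g)
  | 0, _, _, _, _, _, _ => trivial
  | k + 1, W, X, Y, f, ⟨Z, g, h, hg, hh, e⟩, a =>
    ⟨Z, a ≫ g, h, hg.precomp a, hh, by rw [e, Category.assoc]⟩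

lemma GC.one {U : Set C} {X Y : C} {g : X ⟶ Y} : GC U 1 g ↔ ghost U g := by
  constructor
  · rintro ⟨Z, g, h, hg, -, rfl⟩
    exact hg.comp h
  · intro h
    exact ⟨Y, g, 𝟙 _, h, trivial, by simp⟩

lemma GC.split {U : Set C} : ∀ (a b : ℕ) {X Y : C} (f : X ⟶ Y), GC U (a + b) f →
    ∃ (Z : C) (g : X ⟶ Z) (h : Z ⟶ Y), GC U a g ∧ GC U b h ∧ f = g ≫ h
  | 0, b, X, Y, f, hf => ⟨X, 𝟙 X, f, trivial, by rwa [Nat.zero_add] at hf, by simp⟩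
  | a + 1, b, X, Y, f, hf => by
    rw [show a + 1 + b = (a + b) + 1 by lia] at hf
    obtain ⟨Z, g, h, hg, hh, rfl⟩ := hf
    obtain ⟨W, p, q, hp, hq, rfl⟩ := GC.split a b h hh
    exact ⟨W, g ≫ p, q, ⟨Z, g, p, hg, hp, rfl⟩, hq, by simp⟩

lemma GC.mono_succ {U : Set C} {k : ℕ} {X Y : C} {f : X ⟶ Y} (h : GC U (k + 1) f) :
    GC U k f := by
  obtain ⟨Z, g, h, hg, hh, rfl⟩ := h
  exact hh.precomp g

lemma GC.mono {U : Set C} {k l : ℕ} (hkl : k ≤ l) {X Y : C} {f : X ⟶ Y} (h : GC U l f) :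
    GC U k f := by
  induction l, hkl using Nat.le_induction with
  | base => exact h
  | succ l _ ih => exact ih h.mono_succ

lemma GC.anti {U U' : Set C} (hU : U ⊆ U') : ∀ {k : ℕ} {X Y : C} {f : X ⟶ Y},
    GC U' k f → GC U k f
  | 0, _, _, _, _ => trivial
  | _ + 1, _, _, _, ⟨Z, g, h, hg, hh, e⟩ =>
    ⟨Z, g, h, fun u hu x => hg u (hU hu) x, GC.anti hU hh, e⟩

/-- `X` has ghost length at most `k`. -/
def GLen (U : Set C) (k : ℕ) (X : C) : Prop := ∀ (Y : C) (f : X ⟶ Y), GC U k f → f = 0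

lemma GLen.retract {U : Set C} {k : ℕ} {X Y : C} (h : GLen U k Y) (i : X ⟶ Y) (r : Y ⟶ X)
    (e : i ≫ r = 𝟙 X) : GLen U k X := fun W f hf => by
  rw [← Category.id_comp f, ← e, Category.assoc, h W (r ≫ f) (hf.precomp r), comp_zero]

lemma GLen.iso {U : Set C} {k : ℕ} {X Y : C} (h : GLen U k Y) (e : X ≅ Y) : GLen U k X :=
  h.retract e.hom e.inv e.hom_inv_id

lemma GLen.coprod {U : Set C} {k : ℕ} {α : Type v} (F : α → C) (h : ∀ i, GLen U k (F i)) :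
    GLen U k (∐ F) := fun W f hf => by
  apply Sigma.hom_ext
  intro i
  rw [h i W _ (hf.precomp _), comp_zero]

lemma GLen.ext {U : Set C} {a b : ℕ} {X Y Z : C} {f : X ⟶ Y} {g : Y ⟶ Z} {h : Z ⟶ X⟦(1 : ℤ)⟧}
    (H : DT f g h) (hX : GLen U a X) (hZ : GLen U b Z) : GLen U (a + b) Y := fun W φ hφ => by
  obtain ⟨V, p, q, hp, hq, rfl⟩ := GC.split a b φ hφ
  obtain ⟨ψ, rfl⟩ := H.y2 p (hX _ _ (hp.precomp f))
  rw [Category.assoc, hZ _ _ (hq.precomp ψ), comp_zero]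

lemma GLen.of {U : Set C} {X : C} (h : X ∈ U) : GLen U 1 X := fun W f hf => by
  have := GC.one.1 hf X h (𝟙 X)
  rwa [Category.id_comp] at this

lemma GLen.zero {U : Set C} {X : C} (h : IsZero X) (k : ℕ) : GLen U k X :=
  fun _ _ _ => h.eq_of_src _ _

lemma GLen.mono {U U' : Set C} (hU : U ⊆ U') {k l : ℕ} (hkl : k ≤ l) {X : C} (h : GLen U k X) :
    GLen U' l X := fun W f hf => h W f ((hf.mono hkl).anti hU)

lemma GLen_coprodPowBig_shift {U U' : Set C} {l : ℕ} (j : ℤ) (hU : ∀ u ∈ U, GLen U' l (u⟦j⟧)) (k : ℕ)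
    {X : C} (h : X ∈ coprodPowBig C U k) : GLen U' (k * l) (X⟦j⟧) := by
  induction k generalizing X with
  | zero => exact GLen.zero (isZero_shift h j) _
  | succ k ih =>
    obtain ⟨A, B, f, g, t, H, ⟨α, F, hF, ⟨e⟩⟩, hB⟩ := h
    obtain ⟨f', g', h', H'⟩ := DT.shift H j
    rw [show (k + 1) * l = l + k * l by ring]
    refine GLen.ext H' ?_ (ih hB)
    exact (GLen.coprod (fun i => (F i)⟦j⟧) (fun i => hU _ (hF i))).iso
      ((shiftFunctor C j).mapIso e ≪≫ (sigmaShift F j).symm)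

lemma GLen_smd_shift {U U' : Set C} {l : ℕ} (j : ℤ) (hU : ∀ u ∈ U, GLen U' l (u⟦j⟧)) (k : ℕ)
    {X : C} (h : X ∈ smd C (coprodPowBig C U k)) : GLen U' (k * l) (X⟦j⟧) := by
  obtain ⟨Y, hY, i, r, e⟩ := h
  exact (GLen_coprodPowBig_shift j hU k hY).retract (i⟦j⟧') (r⟦j⟧')
    (by rw [← Functor.map_comp, e, CategoryTheory.Functor.map_id])

lemma GLen_coprodPowBig {U : Set C} (k : ℕ)
    {X : C} (h : X ∈ coprodPowBig C U k) : GLen U k X := by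
  induction k generalizing X with
  | zero => exact GLen.zero h _
  | succ k ih =>
    obtain ⟨A, B, f, g, t, H, ⟨α, F, hF, ⟨e⟩⟩, hB⟩ := h
    rw [Nat.add_comm]
    refine GLen.ext H ?_ (ih hB)
    exact (GLen.coprod F (fun i => GLen.of (hF i))).iso e

lemma GLen_smd {U : Set C} (k : ℕ)
    {X : C} (h : X ∈ smd C (coprodPowBig C U k)) : GLen U k X := by
  obtain ⟨Y, hY, i, r, e⟩ := h
  exact (GLen_coprodPowBig k hY).retract i r e

lemma GLen_ext {U : Set C} {X : C} (h : extClosure C U X) : ∃ k, GLen U k X := by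
  induction h with
  | of h => exact ⟨1, GLen.of h⟩
  | zero h => exact ⟨0, GLen.zero h _⟩
  | ext f g k H _ _ h1 h2 =>
    obtain ⟨a, ha⟩ := h1
    obtain ⟨b, hb⟩ := h2
    exact ⟨_, GLen.ext H ha hb⟩

/-- Every object has an approximation by a coproduct of objects of `U`, with ghost cone. -/
def HasAppr (U : Set C) : Prop := ∀ X : C, ∃ (A X' : C) (i : A ⟶ X) (e : X ⟶ X')
  (δ : X' ⟶ A⟦(1 : ℤ)⟧), DT i e δ ∧ A ∈ bigAddClosure C U ∧ ghost U e

lemma HasAppr.univ {U : Set C} (hU : HasAppr U) (k : ℕ) : ∀ X : C, ∃ (E X' : C) (b : E ⟶ X)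
    (e : X ⟶ X'), E ∈ coprodPowBig C U k ∧ GC U k e ∧
      ∀ (K : C) (x : K ⟶ X), x ≫ e = 0 → ∃ y : K ⟶ E, x = y ≫ b := by
  induction k with
  | zero =>
    intro X
    refine ⟨0, X, 0, 𝟙 X, isZero_zero C, trivial, ?_⟩
    intro K x hx
    exact ⟨0, by rw [Category.comp_id] at hx; rw [hx, zero_comp]⟩
  | succ k ih =>
    intro X
    obtain ⟨A, X1, i, e0, δ, H, hA, he⟩ := hU X
    obtain ⟨E1, X2, b1, e1, hE1, he1, hb1⟩ := ih X1
    obtain ⟨E, p, q, HE⟩ := distinguished_cocone_triangle₂ (b1 ≫ δ)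
    obtain ⟨b, hb, hb'⟩ := DT.m2 HE H (𝟙 A) b1 (by simp)
    rw [Category.id_comp] at hb
    refine ⟨E, X2, b, e0 ≫ e1, ⟨A, E1, p, q, _, HE, hA, hE1⟩, ⟨X1, e0, e1, he, he1, rfl⟩, ?_⟩
    intro K x hx
    obtain ⟨y1, hy1⟩ := hb1 K (x ≫ e0) (by rw [Category.assoc, hx])
    obtain ⟨y, rfl⟩ := DT.c3 HE y1 (by
      rw [← Category.assoc, ← hy1, Category.assoc, H.w23, comp_zero])
    obtain ⟨z, hz⟩ := H.c2 (x - y ≫ b) (by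
      rw [Preadditive.sub_comp, hy1, Category.assoc, Category.assoc, hb', sub_self])
    refine ⟨y + z ≫ p, ?_⟩
    rw [Preadditive.add_comp, Category.assoc, hb, ← hz]
    abel

lemma HasAppr.mem_of_GLen {U : Set C} (hU : HasAppr U) {k : ℕ} {X : C} (h : GLen U k X) :
    X ∈ smd C (coprodPowBig C U k) := by
  obtain ⟨E, X', b, e, hE, he, hb⟩ := hU.univ k X
  obtain ⟨y, hy⟩ := hb X (𝟙 X) (by rw [h _ _ he, comp_zero])
  exact ⟨E, hE, y, b, hy.symm⟩

/-- The class of shifts `Σʲ G`, `j ∈ P`. -/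
def sh (G : C) (P : Set ℤ) : Set C := {X | ∃ j ∈ P, Nonempty (X ≅ G⟦j⟧)}

lemma sh_mem (G : C) {P : Set ℤ} {j : ℤ} (h : j ∈ P) : G⟦j⟧ ∈ sh G P := ⟨j, h, ⟨Iso.refl _⟩⟩

lemma sh_mono (G : C) {P Q : Set ℤ} (h : P ⊆ Q) : sh G P ⊆ sh G Q :=
  fun _ ⟨j, hj, e⟩ => ⟨j, h hj, e⟩

lemma unionIcc_eq (G : C) (a b : ℤ) : unionIcc C (genSeqPos C G) a b = sh G (Set.Icc a b) := by
  ext X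
  simp [unionIcc, genSeqPos, singletonShift, sh, and_assoc]

lemma unionIic_eq (G : C) (b : ℤ) : unionIic C (genSeqPos C G) b = sh G (Set.Iic b) := by
  ext X
  simp [unionIic, genSeqPos, singletonShift, sh]

lemma unionAll_eq (G : C) : unionAll C (genSeqPos C G) = sh G Set.univ := by
  ext X
  simp [unionAll, genSeqPos, singletonShift, sh]

lemma hasAppr_sh (G : C) (P : Set ℤ) : HasAppr (sh G P) := by
  intro X
  let F : (Σ j : P, (G⟦(j : ℤ)⟧ ⟶ X)) → C := fun p => G⟦(p.1 : ℤ)⟧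
  let i : ∐ F ⟶ X := Sigma.desc fun p => p.2
  obtain ⟨X', e, δ, H⟩ := distinguished_cocone_triangle i
  refine ⟨∐ F, X', i, e, δ, H, ⟨_, F, fun p => sh_mem G p.1.2, ⟨Iso.refl _⟩⟩, ?_⟩
  rintro u ⟨j, hj, ⟨t⟩⟩ x
  have : t.inv ≫ x = Sigma.ι F ⟨⟨j, hj⟩, t.inv ≫ x⟩ ≫ i := by simp [i]
  have h2 : x = t.hom ≫ Sigma.ι F ⟨⟨j, hj⟩, t.inv ≫ x⟩ ≫ i := by rw [← this]; simp
  rw [h2, Category.assoc, Category.assoc, DT.w12 H, comp_zero, comp_zero]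

lemma sh_shift (G : C) {P Q : Set ℤ} (n : ℤ) (h : ∀ j ∈ P, j + n ∈ Q) {X : C} (hX : X ∈ sh G P) :
    X⟦n⟧ ∈ sh G Q := by
  obtain ⟨j, hj, ⟨e⟩⟩ := hX
  exact ⟨j + n, h j hj, ⟨(shiftFunctor C n).mapIso e ≪≫ shIso G j n (j + n) rfl⟩⟩

lemma GLen_sh_shift (G : C) {P Q : Set ℤ} (n : ℤ) (h : ∀ j ∈ P, j + n ∈ Q) {k : ℕ} {X : C}
    (hX : GLen (sh G P) k X) : GLen (sh G Q) k (X⟦n⟧) := by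
  have := GLen_smd_shift (U' := sh G Q) (l := 1) n (fun u hu => GLen.of (sh_shift G n h hu)) k
    ((hasAppr_sh G P).mem_of_GLen hX)
  rwa [mul_one] at this



/-! ### Towers and homotopy colimits -/

section tower

variable (Y : ℕ → C) (e : ∀ n, Y n ⟶ Y (n + 1))

/-- The shift endomorphism of the coproduct of a sequence. -/
noncomputable def sft : seqCoprod C Y ⟶ seqCoprod C Y :=
  Sigma.desc (fun n => e n.down ≫ seqInj C Y (n.down + 1))

lemma seqInj_sft (n : ℕ) : seqInj C Y n ≫ sft Y e = e n ≫ seqInj C Y (n + 1) := by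
  exact Sigma.ι_desc _ _

lemma seq_ext {Y : ℕ → C} {W : C} {f g : seqCoprod C Y ⟶ W}
    (h : ∀ n, seqInj C Y n ≫ f = seqInj C Y n ≫ g) : f = g := by
  apply Sigma.hom_ext
  rintro ⟨n⟩
  exact h n

/-- The map out of the coproduct of a sequence. -/
noncomputable def seqDesc {Y : ℕ → C} {W : C} (c : ∀ n, Y n ⟶ W) : seqCoprod C Y ⟶ W :=
  Sigma.desc fun n => c n.down

lemma seqInj_desc {Y : ℕ → C} {W : C} (c : ∀ n, Y n ⟶ W) (n : ℕ) :
    seqInj C Y n ≫ seqDesc c = c n := by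
  exact Sigma.ι_desc _ _

/-- Powers of the shift endomorphism. -/
noncomputable def sftPow : ℕ → (seqCoprod C Y ⟶ seqCoprod C Y)
  | 0 => 𝟙 _
  | n + 1 => sft Y e ≫ sftPow n

lemma sft_inj {K : C} (N : ℕ) (g : K ⟶ seqCoprod C Y) (h : g ≫ (𝟙 _ - sft Y e) = 0)
    (hN : g ≫ sftPow Y e N = 0) : g = 0 := by
  have h1 : g ≫ sft Y e = g := by
    rw [Preadditive.comp_sub, Category.comp_id, sub_eq_zero] at h
    exact h.symm
  have h2 : ∀ n, g ≫ sftPow Y e n = g := by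
    intro n
    induction n with
    | zero => simp [sftPow]
    | succ n ih => rw [sftPow, ← Category.assoc, h1, ih]
  rw [← h2 N, hN]

lemma sft_surj {K : C} (N : ℕ) (g : K ⟶ seqCoprod C Y)
    (hN : g ≫ sftPow Y e N = 0) : ∃ h, g = h ≫ (𝟙 _ - sft Y e) := by
  induction N generalizing g with
  | zero =>
    refine ⟨0, ?_⟩
    rw [sftPow, Category.comp_id] at hN
    rw [hN, zero_comp]
  | succ N ih =>
    obtain ⟨h, hh⟩ := ih (g ≫ sft Y e) (by rwa [Category.assoc])
    refine ⟨g + h, ?_⟩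
    rw [Preadditive.add_comp, ← hh, Preadditive.comp_sub, Category.comp_id]
    abel

lemma seqInj_sftPow (N k : ℕ) : ∃ (m : ℕ) (a : Y k ⟶ Y m), m = k + N ∧
    seqInj C Y k ≫ sftPow Y e N = a ≫ seqInj C Y m := by
  induction N generalizing k with
  | zero => exact ⟨k, 𝟙 _, rfl, by simp [sftPow]⟩
  | succ N ih =>
    obtain ⟨m, a, hm, ha⟩ := ih (k + 1)
    refine ⟨m, e k ≫ a, by lia, ?_⟩
    rw [sftPow, ← Category.assoc, seqInj_sft, Category.assoc, ha, Category.assoc]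

open Classical in
/-- The projections from the coproduct of a sequence. -/
noncomputable def seqPi (n : ℕ) : seqCoprod C Y ⟶ Y n :=
  Sigma.π (fun n : ULift.{v} ℕ => Y n.down) ⟨n⟩

lemma seqInj_pi (n : ℕ) : seqInj C Y n ≫ seqPi Y n = 𝟙 _ := by
  simp only [seqInj, seqPi]
  exact Sigma.ι_π_eq_id _ _

lemma seqInj_pi_ne {n m : ℕ} (h : n ≠ m) : seqInj C Y n ≫ seqPi Y m = 0 := by
  simp only [seqInj, seqPi]
  exact Sigma.ι_π_of_ne _ (by simpa using h)

/-- The idempotent attached to a finite set of indices. -/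
noncomputable def seqPr (s : Finset (ULift.{v} ℕ)) : seqCoprod C Y ⟶ seqCoprod C Y :=
  pr (fun n : ULift.{v} ℕ => Y n.down) s

lemma seqPr_eq_sum (s : Finset (ULift.{v} ℕ)) :
    seqPr Y s = ∑ i ∈ s, seqPi Y i.down ≫ seqInj C Y i.down := by
  refine (pr_eq_sum (fun n : ULift.{v} ℕ => Y n.down) s).trans ?_
  apply Finset.sum_congr rfl
  intro i _
  simp only [seqPi, seqInj]
  congr!

lemma compact_seqPr {K : C} (hK : IsCompactObj C K) (g : K ⟶ seqCoprod C Y) :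
    ∃ s, g ≫ seqPr Y s = g := (compact_iff K).1 hK _ _ g

lemma compact_sft {K : C} (hK : IsCompactObj C K) (N : ℕ)
    (h : ∀ k (x : K ⟶ Y k), x ≫ seqInj C Y k ≫ sftPow Y e N = 0) (g : K ⟶ seqCoprod C Y) :
    g ≫ sftPow Y e N = 0 := by
  obtain ⟨s, hs⟩ := compact_seqPr Y hK g
  rw [← hs, seqPr_eq_sum, Category.assoc, Preadditive.sum_comp, Preadditive.comp_sum]
  apply Finset.sum_eq_zero
  rintro ⟨n⟩ _
  have := h n (g ≫ seqPi Y n)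
  simp only [Category.assoc] at this ⊢
  exact this

variable {Y e}
variable {H : C} {π : seqCoprod C Y ⟶ H} {δ : H ⟶ (seqCoprod C Y)⟦(1 : ℤ)⟧}

lemma hz_hocolim (D : DT (𝟙 _ - sft Y e) π δ) {K : C}
    (h1 : ∀ g : K ⟶ seqCoprod C Y, ∃ N, g ≫ sftPow Y e N = 0)
    (h2 : ∀ g : K⟦(1 : ℤ)⟧ ⟶ seqCoprod C Y, ∃ N, g ≫ sftPow Y e N = 0) : HZ (K⟦(1 : ℤ)⟧) H := by
  intro x
  obtain ⟨y, hy⟩ := (shiftFunctor C (1 : ℤ)).map_surjective (x ≫ δ)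
  obtain ⟨N, hN⟩ := h1 y
  have : y = 0 := sft_inj Y e N y (by
    apply (shiftFunctor C (1 : ℤ)).map_injective
    rw [Functor.map_comp, hy, Category.assoc, D.w31, comp_zero, Functor.map_zero]) hN
  obtain ⟨z, rfl⟩ := D.c3 x (by rw [← hy, this, Functor.map_zero])
  obtain ⟨N, hN⟩ := h2 z
  obtain ⟨k, rfl⟩ := sft_surj Y e N z hN
  rw [Category.assoc, D.w12, comp_zero]

lemma hz_hocolim_sh (D : DT (𝟙 _ - sft Y e) π δ) (G : C) (m : ℤ)
    (h : ∀ j, (j = m ∨ j = m - 1) → ∀ g : G⟦j⟧ ⟶ seqCoprod C Y, ∃ N, g ≫ sftPow Y e N = 0) :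
    HZ (G⟦m⟧) H := by
  let t := shIso G (m - 1) 1 m (by lia)
  refine (hz_hocolim D (K := G⟦m - 1⟧) (h _ (Or.inr rfl)) ?_).iso_left t.symm
  intro g
  obtain ⟨N, hN⟩ := h m (Or.inl rfl) (t.inv ≫ g)
  refine ⟨N, ?_⟩
  rw [Category.assoc] at hN
  rw [← cancel_epi t.inv, hN, comp_zero]

/-- Solving a recursion along a tower. -/
lemma tower_rec {w : C} (hext : ∀ n (c : Y n ⟶ w), ∃ c', e n ≫ c' = c) (b : ∀ n, Y n ⟶ w)
    (c0 : Y 0 ⟶ w) : ∃ c : ∀ n, Y n ⟶ w, c 0 = c0 ∧ ∀ n, e n ≫ c (n + 1) = c n - b n := by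
  choose F hF using hext
  let c : ∀ n, Y n ⟶ w := fun n => Nat.rec (motive := fun n => Y n ⟶ w) c0
    (fun n x => F n (x - b n)) n
  exact ⟨c, rfl, fun n => hF n (c n - b n)⟩

lemma desc_rec {w : C} {b c : ∀ n, Y n ⟶ w} (h : ∀ n, e n ≫ c (n + 1) = c n - b n) :
    (𝟙 _ - sft Y e) ≫ seqDesc c = seqDesc b := by
  apply seq_ext
  intro n
  rw [← Category.assoc, Preadditive.comp_sub, Category.comp_id, seqInj_sft,
    Preadditive.sub_comp, Category.assoc, seqInj_desc, seqInj_desc, seqInj_desc, h]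
  abel

lemma inj_π (D : DT (𝟙 _ - sft Y e) π δ) (n : ℕ) :
    seqInj C Y n ≫ π = e n ≫ seqInj C Y (n + 1) ≫ π := by
  have := seqInj C Y n ≫= D.w12
  rw [← Category.assoc, Preadditive.comp_sub, Category.comp_id, seqInj_sft,
    Preadditive.sub_comp, comp_zero, sub_eq_zero, Category.assoc] at this
  exact this

end tower

lemma tower_exists {U : Set C} (hU : HasAppr U) (X : C) :
    ∃ (Y : ℕ → C) (e : ∀ n, Y n ⟶ Y (n + 1)) (A : ℕ → C) (i : ∀ n, A n ⟶ Y n)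
      (δ : ∀ n, Y (n + 1) ⟶ (A n)⟦(1 : ℤ)⟧), Y 0 = X ∧
      ∀ n, DT (i n) (e n) (δ n) ∧ A n ∈ bigAddClosure C U ∧ ghost U (e n) := by
  choose A X' i e δ h using hU
  let Y : ℕ → C := fun n => Nat.rec X (fun _ Z => X' Z) n
  exact ⟨Y, fun n => e (Y n), fun n => A (Y n), fun n => i (Y n), fun n => δ (Y n), rfl,
    fun n => h (Y n)⟩

lemma bigAdd_hz {U : Set C} {A w : C} (hA : A ∈ bigAddClosure C U) (h : ∀ u ∈ U, HZ u w) :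
    HZ A w := by
  obtain ⟨α, F, hF, ⟨t⟩⟩ := hA
  exact (hz_coprod F fun i => h _ (hF i)).iso_left t

lemma sh_hz {G w : C} {P : Set ℤ} (h : ∀ m ∈ P, HZ (G⟦m⟧) w) : ∀ u ∈ sh G P, HZ u w := by
  rintro u ⟨j, hj, ⟨t⟩⟩
  exact (h j hj).iso_left t

/-- In a tower of ghosts the homotopy colimit has no maps from the objects. -/
lemma ghost_hocolim {G : C} (hG : IsCompactObj C G) {P : Set ℤ} {Y : ℕ → C}
    {e : ∀ n, Y n ⟶ Y (n + 1)} (he : ∀ n, ghost (sh G P) (e n)) {H : C}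
    {π : seqCoprod C Y ⟶ H} {δ : H ⟶ (seqCoprod C Y)⟦(1 : ℤ)⟧} (D : DT (𝟙 _ - sft Y e) π δ)
    {m : ℤ} (hm : m ∈ P) (hm' : m - 1 ∈ P) : HZ (G⟦m⟧) H := by
  apply hz_hocolim_sh D
  intro j hj g
  have hj' : j ∈ P := by rcases hj with rfl | rfl <;> assumption
  refine ⟨1, compact_sft Y e (compact_shift hG j) 1 ?_ g⟩
  intro k x
  rw [sftPow, sftPow, Category.comp_id, seqInj_sft, ← Category.assoc,
    he k _ (sh_mem G hj') x, zero_comp]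

/-- The truncation triangle. -/
lemma trunc {G : C} (hG : IsCompactObj C G) {P : Set ℤ} (hP : ∀ m ∈ P, m - 1 ∈ P) (t : C) :
    ∃ (u v : C) (f : u ⟶ t) (g : t ⟶ v) (h : v ⟶ u⟦(1 : ℤ)⟧), DT f g h ∧
      (∀ m ∈ P, HZ (G⟦m⟧) v) ∧ ∀ w, (∀ m ∈ P, HZ (G⟦m⟧) w) → HZ u w := by
  obtain ⟨Y, e, A, i, δ, rfl, hY⟩ := tower_exists (hasAppr_sh G P) t
  obtain ⟨v, π, d, D⟩ := distinguished_cocone_triangle (𝟙 _ - sft Y e)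
  obtain ⟨u, f, h, Hu⟩ := distinguished_cocone_triangle₁ (seqInj C Y 0 ≫ π)
  refine ⟨u, v, f, _, h, Hu, fun m hm => ghost_hocolim hG (fun n => (hY n).2.2) D hm (hP m hm), ?_⟩
  intro w hw
  have hA : ∀ n, HZ (A n) w := fun n => bigAdd_hz (hY n).2.1 (sh_hz hw)
  have hext : ∀ n (c : Y n ⟶ w), ∃ c', e n ≫ c' = c := by
    intro n c
    obtain ⟨c', hc'⟩ := DT.y2 (hY n).1 c (hA n _)
    exact ⟨c', hc'.symm⟩
  intro x
  have inj : ∀ φ : v ⟶ w⟦(1 : ℤ)⟧, seqInj C Y 0 ≫ π ≫ φ = 0 → φ = 0 := by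
    intro φ hφ
    have h1 : ∀ n, seqInj C Y n ≫ π ≫ φ = 0 := by
      intro n
      induction n with
      | zero => exact hφ
      | succ n ih =>
        obtain ⟨z, hz⟩ := DT.y3 (hY n).1 (seqInj C Y (n + 1) ≫ π ≫ φ) (by
          rw [← Category.assoc, inj_π D, Category.assoc, Category.assoc] at ih
          exact ih)
        rw [hz, (hz_shift_iff 1).2 (hA n) z, comp_zero]
    obtain ⟨χ, rfl⟩ := DT.y3 D φ (seq_ext fun n => by rw [h1, comp_zero])
    obtain ⟨χ', rfl⟩ := (shiftFunctor C (1 : ℤ)).map_surjective χ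
    obtain ⟨c, -, hc⟩ := tower_rec hext (fun n => seqInj C Y n ≫ χ') 0
    have : χ' = (𝟙 _ - sft Y e) ≫ seqDesc c := by
      rw [desc_rec hc]
      exact seq_ext fun n => by rw [seqInj_desc]
    rw [this, Functor.map_comp, ← Category.assoc, DT.w31 D, zero_comp]
  have h2 : h ≫ x⟦(1 : ℤ)⟧' = 0 := inj _ (by
    have := DT.w23 Hu
    rw [Category.assoc] at this
    rw [← Category.assoc π, ← Category.assoc, this, zero_comp])
  obtain ⟨ψ, hψ⟩ := DT.y4 Hu _ h2
  obtain ⟨ψ', rfl⟩ := (shiftFunctor C (1 : ℤ)).map_surjective ψ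
  rw [← Functor.map_comp] at hψ
  have hx := (shiftFunctor C (1 : ℤ)).map_injective hψ
  obtain ⟨c, hc0, hc⟩ := tower_rec hext (fun n => 0) ψ'
  obtain ⟨ψ'', h3⟩ := DT.y2 D (seqDesc c) (by
    rw [desc_rec hc]
    exact seq_ext fun n => by rw [seqInj_desc, comp_zero])
  have h4 : ψ' = (seqInj C Y 0 ≫ π) ≫ ψ'' := by
    rw [Category.assoc, ← h3, seqInj_desc, hc0]
  rw [hx, h4, ← Category.assoc, DT.w12 Hu, zero_comp]

/-! ### The generating sequence -/

section pi

variable (Y : ℕ → C) (e : ∀ n, Y n ⟶ Y (n + 1))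

lemma sft_pi (n : ℕ) : sft Y e ≫ seqPi Y (n + 1) = seqPi Y n ≫ e n := by
  apply seq_ext
  intro k
  rw [← Category.assoc, seqInj_sft, Category.assoc, ← Category.assoc _ _ (e n)]
  by_cases h : k = n
  · subst h
    rw [seqInj_pi, seqInj_pi]; simp
  · rw [seqInj_pi_ne Y h, seqInj_pi_ne Y (by lia)]; simp

lemma sft_pi_zero : sft Y e ≫ seqPi Y 0 = 0 := by
  apply seq_ext
  intro k
  rw [← Category.assoc, seqInj_sft, Category.assoc, seqInj_pi_ne Y (by lia)]; simp

lemma compact_pi {K : C} (hK : IsCompactObj C K) (g : K ⟶ seqCoprod C Y) :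
    ∃ n, g ≫ seqPi Y n = 0 := by
  obtain ⟨s, hs⟩ := compact_seqPr Y hK g
  obtain ⟨⟨n⟩, hn⟩ := Infinite.exists_notMem_finset s
  refine ⟨n, ?_⟩
  rw [← hs, Category.assoc, seqPr_eq_sum, Preadditive.sum_comp, Preadditive.comp_sum]
  apply Finset.sum_eq_zero
  rintro ⟨k⟩ hk
  rw [Category.assoc, seqInj_pi_ne Y (by rintro rfl; exact hn hk), comp_zero, comp_zero]

/-- The composites of the maps in a tower. -/
noncomputable def towComp : ∀ n, Y 0 ⟶ Y n
  | 0 => 𝟙 _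
  | n + 1 => towComp n ≫ e n

end pi

lemma compact_mem_smd {G : C} (hG : IsCompactGenerator C G) {X : C} (hX : IsCompactObj C X) :
    X ∈ smd C {X | extClosure C (sh G Set.univ) X} := by
  have hU := hasAppr_sh G Set.univ
  obtain ⟨Y, e, A, i, δ, rfl, hY⟩ := tower_exists hU X
  obtain ⟨v, π, d, D⟩ := distinguished_cocone_triangle (𝟙 _ - sft Y e)
  have hv : IsZero v := hG.2 v fun m =>
    ghost_hocolim hG.1 (fun n => (hY n).2.2) D (Set.mem_univ m) (Set.mem_univ _)
  obtain ⟨y, hy⟩ := DT.c2 D (seqInj C Y 0) (hv.eq_of_tgt _ _)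
  have hc : ∀ n, y ≫ seqPi Y n = towComp Y e n := by
    intro n
    rw [Preadditive.comp_sub, Category.comp_id] at hy
    induction n with
    | zero =>
      have := hy =≫ seqPi Y 0
      rw [seqInj_pi, Preadditive.sub_comp, Category.assoc, sft_pi_zero, comp_zero, sub_zero] at this
      exact this.symm
    | succ n ih =>
      have := hy =≫ seqPi Y (n + 1)
      rw [seqInj_pi_ne Y (by lia), Preadditive.sub_comp, Category.assoc, sft_pi,
        ← Category.assoc, ih] at this
      exact sub_eq_zero.1 this.symm
  obtain ⟨N, hN⟩ := compact_pi Y hX y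
  rw [hc] at hN
  have huniv : ∀ n (Z : C) (f : Y 0 ⟶ Z), GC (sh G Set.univ) n f →
      ∃ f', f = towComp Y e n ≫ f' := by
    intro n
    induction n with
    | zero => exact fun Z f _ => ⟨f, by simp [towComp]⟩
    | succ n ih =>
      intro Z f hf
      obtain ⟨W, p, q, hp, hq, rfl⟩ := GC.split n 1 f hf
      obtain ⟨p', rfl⟩ := ih _ p hp
      have hg : ghost (sh G Set.univ) (p' ≫ q) := (GC.one.1 hq).precomp p'
      obtain ⟨f', hf'⟩ := DT.y2 (hY n).1 (p' ≫ q) (by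
        obtain ⟨α, F, hF, ⟨t⟩⟩ := (hY n).2.1
        rw [← cancel_epi t.inv, comp_zero]
        apply Sigma.hom_ext
        intro a
        rw [comp_zero, ← Category.assoc, ← Category.assoc]
        exact hg _ (hF a) _)
      refine ⟨f', ?_⟩
      rw [towComp, Category.assoc, Category.assoc, hf']
  have hL : GLen (sh G Set.univ) N (Y 0) := by
    intro Z f hf
    obtain ⟨f', rfl⟩ := huniv N Z f hf
    rw [hN, zero_comp]
  obtain ⟨E, hE, i, r, hir⟩ := hU.mem_of_GLen hL
  have hV : ∀ u ∈ sh G Set.univ, IsCompactObj C u := by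
    rintro u ⟨j, -, ⟨t⟩⟩
    exact compact_iso (compact_shift hG.1 j) t
  obtain ⟨K, a, b, hK, hab⟩ := FF_big hV
    (bigClosure.retract i r hir (coprodPowBig_le_big N hE)) (Y 0) hX (𝟙 _)
  exact ⟨K, hK, a, b, hab.symm⟩

lemma sh_compact {G : C} (hG : IsCompactGenerator C G) (P : Set ℤ) :
    ∀ u ∈ sh G P, IsCompactObj C u := by
  rintro u ⟨j, -, ⟨t⟩⟩
  exact compact_iso (compact_shift hG.1 j) t

lemma smd_of_mem {U : Set C} {X : C} (h : X ∈ U) : X ∈ smd C U := ⟨X, h, 𝟙 _, 𝟙 _, by simp⟩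

lemma isGenSeq {G : C} (hG : IsCompactGenerator C G) : IsGenSeq C (genSeqPos C G) where
  compact := by
    rintro i X ⟨t⟩
    exact compact_iso (compact_shift hG.1 i) t
  generates := by
    rw [unionAll_eq]
    apply Set.Subset.antisymm
    · rintro X ⟨Y, hY, i, r, e⟩
      exact compact_retract (extClosure_compact (sh_compact hG _) hY) i r e
    · intro X hX
      exact compact_mem_smd hG hX
  shift_cond := by
    intro n X hX
    rw [gInt, unionIcc_eq]
    apply smd_of_mem
    apply extClosure.of
    rcases hX with (⟨a, ⟨t⟩, ⟨s⟩⟩ | t) | ⟨a, ⟨t⟩, ⟨s⟩⟩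
    · exact ⟨n - 1, by simp; lia, ⟨s ≪≫ (shiftFunctor C (-1)).mapIso t ≪≫
        shIso G n (-1) (n - 1) (by lia)⟩⟩
    · exact ⟨n, by simp, t⟩
    · exact ⟨n + 1, by simp; lia, ⟨s ≪≫ (shiftFunctor C 1).mapIso t ≪≫
        shIso G n 1 (n + 1) (by lia)⟩⟩



/-! ### The orthogonal metric attached to a generator -/

lemma mem_rOrth_MG {G w : C} {n : ℤ} :
    w ∈ rOrth C (MG C (genSeqPos C G) n) ↔ ∀ m ≤ -n, HZ (G⟦m⟧) w := by
  rw [MG, gIic, unionIic_eq]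
  constructor
  · intro h m hm
    exact h _ (smd_of_mem (extClosure.of (sh_mem G (P := Set.Iic (-n)) hm)))
  · intro h a ha
    exact bigClosure_hz (sh_hz h) (smdExt_le_big ha)

lemma mem_RG {G X : C} {n : ℤ} :
    X ∈ RG C (genSeqPos C G) n ↔ ∀ w, (∀ m ≤ -n, HZ (G⟦m⟧) w) → HZ X w :=
  ⟨fun h w hw => h w (mem_rOrth_MG.2 hw), fun h w hw => h w (mem_rOrth_MG.1 hw)⟩

lemma RG_shift {G X : C} {n : ℤ} (h : X ∈ RG C (genSeqPos C G) n) (j m : ℤ) (hm : m = n - j) :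
    X⟦j⟧ ∈ RG C (genSeqPos C G) m := by
  rw [mem_RG] at h ⊢
  intro w hw
  have := h (w⟦-j⟧) (fun k hk => hz_shift_l (k + j) k (-j) (hw _ (by lia)) (by lia))
  have h2 := hz_shift_r (-j) j 0 this (by lia)
  exact h2.iso_right ((shiftFunctorZero C ℤ).app w).symm

lemma RG_iso {G X Y : C} {n : ℤ} (h : X ∈ RG C (genSeqPos C G) n) (t : Y ≅ X) :
    Y ∈ RG C (genSeqPos C G) n := fun w hw => HZ.iso_left (h w hw) t

lemma RG_anti {G : C} {n m : ℤ} (hnm : n ≤ m) :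
    RG C (genSeqPos C G) m ⊆ RG C (genSeqPos C G) n := by
  intro X hX
  rw [mem_RG] at hX ⊢
  exact fun w hw => hX w fun k hk => hw k (by lia)

lemma shiftSet_RG {G : C} (n : ℤ) :
    shiftSet C (-n) (RG C (genSeqPos C G) 0) = RG C (genSeqPos C G) n := by
  ext X
  constructor
  · rintro ⟨a, ha, ⟨t⟩⟩
    exact RG_iso (RG_shift ha (-n) n (by lia)) t
  · intro h
    exact ⟨X⟦n⟧, RG_shift h n 0 (by lia), ⟨(shIso0 X n (-n) (by lia)).symm⟩⟩

lemma HZ.retract_right {X Y K : C} (h : HZ K Y) (i : X ⟶ Y) (r : Y ⟶ X) (e : i ≫ r = 𝟙 X) :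
    HZ K X := fun f => by
  rw [← Category.comp_id f, ← e, ← Category.assoc, h (f ≫ i), zero_comp]

lemma coT {G : C} (hG : IsCompactObj C G) :
    IsCoTStructure C (RG C (genSeqPos C G) 0) {w | ∀ m ≤ -1, HZ (G⟦m⟧) w} where
  smd_closed_ge := by
    rintro X ⟨Y, hY, i, r, e⟩
    exact fun w hw => HZ.retract (hY w hw) i r e
  smd_closed_le := by
    rintro X ⟨Y, hY, i, r, e⟩
    exact fun m hm => HZ.retract_right (hY m hm) i r e
  iso_closed_ge := fun X Y t hX => RG_iso hX t.symm
  iso_closed_le := fun X Y t hX m hm => (hX m hm).iso_right t.symm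
  shift_le := by
    rintro X ⟨w, hw, ⟨t⟩⟩ m hm
    exact (hz_shift_l (m - 1) m 1 (hw _ (by lia)) (by lia)).iso_right t
  shift_ge := fun X hX => ⟨X⟦(-1 : ℤ)⟧, RG_anti (by lia : (0 : ℤ) ≤ 1)
    (RG_shift hX (-1) 1 (by lia)), ⟨(shIso0 X (-1) 1 (by lia)).symm⟩⟩
  orthogonal := by
    rintro X hX v ⟨w, hw, ⟨t⟩⟩
    refine mem_RG.1 hX v fun m hm => ?_
    exact (hz_shift_l (m - 1) m 1 (hw _ (by lia)) (by lia)).iso_right t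
  exists_triangle := by
    intro t
    obtain ⟨u, v, f, g, h, H, hv, hu⟩ := trunc hG (P := Set.Iic 0)
      (fun m hm => by simp only [Set.mem_Iic] at *; lia) t
    refine ⟨u, v, f, g, h, H, mem_RG.2 fun w hw => hu w fun m hm => hw m (by simpa using hm),
      v⟦(-1 : ℤ)⟧, ?_, ⟨(shIso0 v (-1) 1 (by lia)).symm⟩⟩
    intro m hm
    exact hz_shift_l (m + 1) m (-1) (hv _ (by simp only [Set.mem_Iic]; lia)) (by lia)

/-! ### Abstract approximating classes -/

/-- Properties of the approximating classes. -/
structure IsApprClass (G : C) (Q : Set ℤ → ℕ → C → Prop) : Prop where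
  mono : ∀ {P P' : Set ℤ} {k k' : ℕ} {X : C}, P ⊆ P' → k ≤ k' → Q P k X → Q P' k' X
  zero : ∀ {P : Set ℤ} {k : ℕ} {X : C}, IsZero X → Q P k X
  ext : ∀ {P : Set ℤ} {a b : ℕ} {X Y Z : C} {f : X ⟶ Y} {g : Y ⟶ Z} {h : Z ⟶ X⟦(1 : ℤ)⟧},
    DT f g h → Q P a X → Q P b Z → Q P (a + b) Y
  big : ∀ {P : Set ℤ} {k : ℕ} {X : C}, Q P k X → bigClosure C (sh G P) X

lemma apprClass_big (G : C) : IsApprClass G (fun P _ X => bigClosure C (sh G P) X) where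
  mono hP _ h := bigClosure_mono (fun u hu => bigClosure.of (sh_mono G hP hu)) h
  zero h := bigClosure.zero h
  ext H h1 h2 := bigClosure.ext _ _ _ H h1 h2
  big h := h

lemma apprClass_pow (G : C) : IsApprClass G (fun P k X => GLen (sh G P) k X) where
  mono hP hk h := h.mono (sh_mono G hP) hk
  zero h := GLen.zero h _
  ext H h1 h2 := GLen.ext H h1 h2
  big h := by
    obtain ⟨Y, hY, i, r, e⟩ := (hasAppr_sh G _).mem_of_GLen h
    exact bigClosure.retract i r e (coprodPowBig_le_big _ hY)

lemma gBarInt_eq (G : C) (a b : ℤ) :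
    gBarInt C (genSeqPos C G) a b = {X | bigClosure C (sh G (Set.Icc a b)) X} := by
  rw [gBarInt, unionIcc_eq]

lemma gBarIntPow_eq (G : C) (a b k : ℤ) :
    gBarIntPow C (genSeqPos C G) a b k = {X | GLen (sh G (Set.Icc a b)) k.toNat X} := by
  rw [gBarIntPow, unionIcc_eq]
  ext X
  exact ⟨fun h => GLen_smd _ h, fun h => (hasAppr_sh G _).mem_of_GLen h⟩

/-- Closure properties of a triangulated subcategory. -/
structure IsTri (T : Set C) : Prop where
  ext : ∀ {X Y Z : C} {f : X ⟶ Y} {g : Y ⟶ Z} {h : Z ⟶ X⟦(1 : ℤ)⟧},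
    DT f g h → X ∈ T → Z ∈ T → Y ∈ T
  s1 : ∀ {X : C}, X ∈ T → X⟦(1 : ℤ)⟧ ∈ T
  s1' : ∀ {X : C}, X ∈ T → X⟦(-1 : ℤ)⟧ ∈ T

lemma IsTri.cone {T : Set C} (hT : IsTri T) {X Y Z : C} {f : X ⟶ Y} {g : Y ⟶ Z}
    {h : Z ⟶ X⟦(1 : ℤ)⟧} (H : DT f g h) (hX : X ∈ T) (hY : Y ∈ T) : Z ∈ T :=
  hT.ext H.rot hY (hT.s1 hX)

lemma IsTri.fiber {T : Set C} (hT : IsTri T) {X Y Z : C} {f : X ⟶ Y} {g : Y ⟶ Z}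
    {h : Z ⟶ X⟦(1 : ℤ)⟧} (H : DT f g h) (hY : Y ∈ T) (hZ : Z ∈ T) : X ∈ T := by
  obtain ⟨a, c, H'⟩ := H.invrot
  exact hT.ext H' (hT.s1' hZ) hY

section back

variable {G : C} {Rm : ℤ → Set C} {A : ℤ} {Q : Set ℤ → ℕ → C → Prop} {T : Set C}

lemma metric_le (hM : IsExtGoodMetric C Rm) {n m : ℤ} (h : n ≤ m) : Rm m ⊆ Rm n := by
  induction m, h using Int.le_induction with
  | base => exact subset_rfl
  | succ m _ ih => exact (hM.antitone m).trans ih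

lemma hvan (hG : IsCompactGenerator C G) (hM : IsExtGoodMetric C Rm)
    (hv : ∀ n i : ℤ, A ≤ n + i → homZero C (genSeqPos C G n) (Rm i)) {K : C}
    (hK : IsCompactObj C K) : ∃ m0 : ℤ, ∀ m ≥ m0, ∀ X ∈ Rm m, HZ K X := by
  obtain ⟨Y, hY, i, r, e⟩ := compact_mem_smd hG hK
  suffices h : ∃ m0 : ℤ, ∀ m ≥ m0, ∀ X ∈ Rm m, HZ Y X by
    obtain ⟨m0, h⟩ := h
    exact ⟨m0, fun m hm X hX => (h m hm X hX).retract i r e⟩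
  clear e i r
  change extClosure C _ Y at hY
  induction hY with
  | of h =>
    obtain ⟨j, -, t⟩ := h
    exact ⟨A - j, fun m hm X hX => hv j m (by lia) _ t X hX⟩
  | zero h => exact ⟨0, fun m hm X hX => hz_zero_left h⟩
  | ext f g k H _ _ h1 h2 =>
    obtain ⟨a, ha⟩ := h1
    obtain ⟨b, hb⟩ := h2
    exact ⟨max a b, fun m hm X hX => HZ.ext H (ha m (by lia) X hX) (hb m (by lia) X hX)⟩

lemma compact_mem_clos (hM : IsExtGoodMetric C Rm) {K : C} (hK : IsCompactObj C K) :
    K ∈ closCompacts C Rm := by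
  rw [closCompacts, Set.mem_iInter]
  intro n
  exact ⟨K, 0, _, _, _, dt_id_left K, hK, hM.zero_mem n _ (isZero_zero C)⟩

lemma isTri_clos (hM : IsOrthMetric C Rm)
    (hv : ∀ K : C, IsCompactObj C K → ∃ m0 : ℤ, ∀ m ≥ m0, ∀ X ∈ Rm m, HZ K X) :
    IsTri (closCompacts C Rm) where
  ext := by
    intro X Y Z f g h H hX hZ
    rw [closCompacts, Set.mem_iInter] at hX hZ ⊢
    intro n
    obtain ⟨KZ, DZ, kZ, dZ, cZ, HZZ, hKZ, hDZ⟩ := hZ n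
    obtain ⟨m0, hm0⟩ := hv KZ hKZ
    obtain ⟨KX, DX, kX, dX, cX, HX, hKX, hDX⟩ := hX (max n (m0 + 1))
    have h1 : HZ KZ (DX⟦(1 : ℤ)⟧) := hm0 (max n (m0 + 1) - 1) (by lia) _
      (hM.shift_one _ ⟨DX, by rwa [sub_add_cancel], ⟨Iso.refl _⟩⟩)
    obtain ⟨κ, hκ⟩ := DT.c1 (DT.rot HX) (kZ ≫ h) (h1 _)
    obtain ⟨KY, p, q, HK⟩ := distinguished_cocone_triangle₂ (-κ)
    have e3 : (-κ) ≫ kX⟦(1 : ℤ)⟧' = kZ ≫ h := by rw [hκ]; simp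
    obtain ⟨b, e1, e2⟩ := DT.m2 HK H kX kZ e3
    obtain ⟨DY, d, c, HY⟩ := distinguished_cocone_triangle b
    refine ⟨KY, DY, b, d, c, HY, compact_ext HK hKX hKZ, ?_⟩
    rw [← hM.orth n]
    intro w hw
    refine (good_iff HY).1 (good3 HK H e1 e2 e3 ((good_iff HX).2 ?_) ((good_iff HZZ).2 ?_))
    · exact hw _ (metric_le hM.toIsExtGoodMetric (le_max_left _ _) hDX)
    · exact hw _ hDZ
  s1 := by
    intro X hX
    rw [closCompacts, Set.mem_iInter] at hX ⊢
    intro n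
    obtain ⟨K, D, k, d, c, H, hK, hD⟩ := hX (n + 1)
    obtain ⟨k', d', c', H'⟩ := DT.shift H 1
    exact ⟨_, _, k', d', c', H', compact_shift hK 1, hM.shift_one _ ⟨D, hD, ⟨Iso.refl _⟩⟩⟩
  s1' := by
    intro X hX
    rw [closCompacts, Set.mem_iInter] at hX ⊢
    intro n
    obtain ⟨K, D, k, d, c, H, hK, hD⟩ := hX (n + 1)
    obtain ⟨k', d', c', H'⟩ := DT.shift H (-1)
    exact ⟨_, _, k', d', c', H', compact_shift hK (-1), hM.shift_neg_one _ ⟨D, hD, ⟨Iso.refl _⟩⟩⟩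

lemma RG_le (hP : IsGPreApprox C (genSeqPos C G) Rm A) (i : ℤ) :
    RG C (genSeqPos C G) (i + A) ⊆ Rm i := by
  intro X hX
  rw [← hP.orthMetric.orth i]
  exact fun w hw => hX w fun a ha => hw a (hP.cond1 i ha).1

/-- Approximation hypothesis. -/
def HApp (Q : Set ℤ → ℕ → C → Prop) (Rm : ℤ → Set C) (T : Set C) (A : ℤ) : Prop :=
  ∀ i : ℤ, ∀ F ∈ Rm i ∩ T, ∃ (E D : C) (f : E ⟶ F) (g : F ⟶ D) (h : D ⟶ E⟦(1 : ℤ)⟧),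
    DT f g h ∧ Q (Set.Icc (-A - i) (A - i)) A.toNat E ∧ D ∈ Rm (i + 1) ∩ T

lemma R_le (hG : IsCompactGenerator C G) (hQ : IsApprClass G Q)
    (hv : ∀ n i : ℤ, A ≤ n + i → homZero C (genSeqPos C G n) (Rm i))
    (hA : HApp Q Rm T A) (i : ℤ) :
    Rm i ∩ T ⊆ RG C (genSeqPos C G) (i - A) := by
  intro F hF
  rw [mem_RG]
  intro w hw φ
  let Ob := {p : ℤ × C // p.2 ∈ Rm p.1 ∩ T}
  choose E D f g h H hE hD using hA
  let nx : Ob → Ob := fun p => ⟨(p.1.1 + 1, D p.1.1 p.1.2 p.2), hD p.1.1 p.1.2 p.2⟩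
  let Z : ℕ → Ob := fun n => Nat.rec ⟨(i, F), hF⟩ (fun _ p => nx p) n
  have hZ : ∀ n, (Z n).1.1 = i + n := by
    intro n
    induction n with
    | zero => simp [Z]
    | succ n ih =>
      change (Z n).1.1 + 1 = _
      rw [ih]; push_cast; ring
  let Y : ℕ → C := fun n => (Z n).1.2
  let e : ∀ n, Y n ⟶ Y (n + 1) := fun n => g _ _ (Z n).2
  obtain ⟨v, π, d, DD⟩ := distinguished_cocone_triangle (𝟙 _ - sft Y e)
  have hv0 : IsZero v := by
    refine hG.2 v fun m => hz_hocolim_sh DD G m ?_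
    intro j _ x
    refine ⟨(A - j - i).toNat, compact_sft Y e (compact_shift hG.1 j) _ ?_ x⟩
    intro k x
    obtain ⟨m, a, hm, ha⟩ := seqInj_sftPow Y e (A - j - i).toNat k
    rw [ha, ← Category.assoc]
    have : x ≫ a = 0 := by
      refine hv j ((Z m).1.1) ?_ _ ⟨Iso.refl _⟩ _ (Z m).2.1 _
      rw [hZ, hm]
      push_cast
      have := Int.self_le_toNat (A - j - i)
      lia
    rw [this, zero_comp]
  have hext : ∀ n (c : Y n ⟶ w), ∃ c', e n ≫ c' = c := by
    intro n c
    obtain ⟨c', hc'⟩ := DT.y2 (H _ _ (Z n).2) c (by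
      refine bigClosure_hz (sh_hz ?_) (hQ.big (hE _ _ (Z n).2)) _
      intro m hm
      have := hm.2
      rw [hZ] at this
      exact hw m (by lia))
    exact ⟨c', hc'.symm⟩
  obtain ⟨c, hc0, hc⟩ := tower_rec hext (fun n => 0) φ
  obtain ⟨ψ, h3⟩ := DT.y2 DD (seqDesc c) (by
    rw [desc_rec hc]
    exact seq_ext fun n => by rw [seqInj_desc, comp_zero])
  have h4 : φ = seqInj C Y 0 ≫ π ≫ ψ := by
    rw [← h3, seqInj_desc, hc0]
  rw [h4, hv0.eq_of_src ψ 0, comp_zero, comp_zero]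

lemma iter (hQ : IsApprClass G Q) (hM : IsOrthMetric C Rm) (hT : IsTri T) (hA0 : 0 < A)
    (hA : HApp Q Rm T A) (i : ℤ) (F : C) (hF : F ∈ Rm i ∩ T) (N : ℕ) :
    ∃ (E D : C) (f : E ⟶ F) (g : F ⟶ D) (h : D ⟶ E⟦(1 : ℤ)⟧),
    DT f g h ∧ Q (Set.Icc (-A - i - N) (A - i)) (N * A.toNat) E ∧ D ∈ Rm (i + N) ∩ T := by
  induction N with
  | zero =>
    refine ⟨0, F, _, _, _, dt_id_right F, hQ.zero (isZero_zero C), ?_⟩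
    simpa using hF
  | succ N ih =>
    obtain ⟨E', D', f', g', h', H', hE', hD'⟩ := ih
    obtain ⟨E2, D2, f2, g2, h2, H2, hE2, hD2⟩ := hA _ D' hD'
    obtain ⟨E, p, q, HE⟩ := distinguished_cocone_triangle₂ (f2 ≫ h')
    have e3 : (f2 ≫ h') ≫ (𝟙 E')⟦(1 : ℤ)⟧' = f2 ≫ h' := by simp
    obtain ⟨b, e1, e2⟩ := DT.m2 HE H' (𝟙 E') f2 e3
    obtain ⟨D, d, c, HD⟩ := distinguished_cocone_triangle b
    refine ⟨E, D, b, d, c, HD, ?_, ?_, ?_⟩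
    · rw [show (N + 1) * A.toNat = N * A.toNat + A.toNat by ring]
      refine hQ.ext HE (hQ.mono ?_ le_rfl hE') (hQ.mono ?_ le_rfl hE2)
      · apply Set.Icc_subset_Icc <;> push_cast <;> lia
      · apply Set.Icc_subset_Icc <;> push_cast <;> lia
    · rw [← hM.orth]
      intro w hw
      refine (good_iff HD).1 (good3 HE H' e1 e2 e3 (good_id _ _) ((good_iff H2).2 ?_))
      refine hw _ ?_
      have := hD2.1
      rw [show i + (N : ℤ) + 1 = i + ((N + 1 : ℕ) : ℤ) by push_cast; ring] at this
      exact this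
    · have t1 := hT.fiber H' hF.2 hD'.2
      have t2 := hT.fiber H2 hD'.2 hD2.2
      exact hT.cone HD (hT.ext HE t1 t2) hF.2

lemma clos_eq (hG : IsCompactGenerator C G) (hQ : IsApprClass G Q)
    (hP : IsGPreApprox C (genSeqPos C G) Rm A)
    (hv : ∀ n i : ℤ, A ≤ n + i → homZero C (genSeqPos C G n) (Rm i))
    (hA : HApp Q Rm (closCompacts C Rm) A) :
    closCompacts C Rm = TPlusC C (RG C (genSeqPos C G) 0) := by
  have hT := isTri_clos hP.orthMetric
    (fun K hK => hvan hG hP.orthMetric.toIsExtGoodMetric hv hK)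
  apply Set.Subset.antisymm
  · intro X hX
    rw [TPlusC, Set.mem_iInter]
    intro n
    have := hX
    rw [closCompacts, Set.mem_iInter] at this
    obtain ⟨K, D, k, d, c, H, hK, hD⟩ := this (n + A)
    refine ⟨K, D, k, d, c, H, hK, ?_⟩
    rw [shiftSet_RG]
    have := R_le hG hQ hv hA (n + A) ⟨hD, hT.cone H
      (compact_mem_clos hP.orthMetric.toIsExtGoodMetric hK) hX⟩
    rwa [add_sub_cancel_right] at this
  · intro X hX
    rw [TPlusC, Set.mem_iInter] at hX
    rw [closCompacts, Set.mem_iInter]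
    intro n
    obtain ⟨K, D, k, d, c, H, hK, hD⟩ := hX (n + A)
    rw [shiftSet_RG] at hD
    exact ⟨K, D, k, d, c, H, hK, RG_le hP n hD⟩

/-- The conclusion of the implication from `G`-approximability. -/
lemma back (hG : IsCompactGenerator C G) (hQ : IsApprClass G Q)
    (hP : IsGPreApprox C (genSeqPos C G) Rm A)
    (hv : ∀ n i : ℤ, A ≤ n + i → homZero C (genSeqPos C G n) (Rm i))
    (hT : IsTri T) (hA : HApp Q Rm T A) :
    ∃ A' : ℤ, 0 < A' ∧ (shiftFunctor C (-A')).obj G ∈ RG C (genSeqPos C G) 0 ∧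
    homZero C (singletonShift C G A') (RG C (genSeqPos C G) 0) ∧
    ∀ F ∈ RG C (genSeqPos C G) 0 ∩ T, ∃ (E D : C) (f : E ⟶ F) (g : F ⟶ D) (h : D ⟶ E⟦(1 : ℤ)⟧),
      DT f g h ∧ Q (Set.Icc (-A') A') A'.toNat E ∧
        D ∈ shiftSet C (-1) (RG C (genSeqPos C G) 0) ∩ T := by
  have hA0 := hP.A_pos
  obtain ⟨a, rfl⟩ := Int.eq_ofNat_of_zero_le hA0.le
  have hU : RG C (genSeqPos C G) 0 ⊆ Rm (-(a : ℤ)) := by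
    have := RG_le hP (-(a : ℤ))
    rwa [neg_add_cancel] at this
  refine ⟨((2 * a + 1) * a + (2 * a + 1) : ℕ), by positivity, ?_, ?_, ?_⟩
  · rw [mem_RG]
    intro w hw
    exact hw _ (by simp only [neg_zero, Left.neg_nonpos_iff]; positivity)
  · intro x hx y hy
    exact hv _ _ (by push_cast; nlinarith) x hx y (hU hy)
  · intro F hF
    obtain ⟨E, D, f, g, h, H, hE, hD⟩ := iter hQ hP.orthMetric hT hA0 hA (-(a : ℤ)) F
      ⟨hU hF.1, hF.2⟩ (2 * a + 1)
    refine ⟨E, D, f, g, h, H, hQ.mono ?_ ?_ hE, ?_, hD.2⟩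
    · apply Set.Icc_subset_Icc <;> push_cast <;> nlinarith
    · simp only [Int.toNat_natCast]; lia
    · have := R_le hG hQ hv hA _ hD
      rw [shiftSet_RG]
      convert this using 2
      push_cast; ring

end back



/-! ### From co-t-structures to metrics -/

section fwd

variable {G H : C} {U V : Set C} {A : ℤ}

lemma V_shift (hc : IsCoTStructure C U V) {v : C} (hv : v ∈ V) (n : ℕ) : v⟦(n : ℤ)⟧ ∈ V := by
  induction n with
  | zero => exact hc.iso_closed_le ((shiftFunctorZero C ℤ).app v).symm hv
  | succ n ih =>
    exact hc.iso_closed_le (shIso v n 1 ((n + 1 : ℕ) : ℤ) (by push_cast; ring))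
      (hc.shift_le ⟨_, ih, ⟨Iso.refl _⟩⟩)

lemma V_shift' (hc : IsCoTStructure C U V) {v : C} (hv : v ∈ V) (n : ℤ) (hn : 0 ≤ n) :
    v⟦n⟧ ∈ V := by
  obtain ⟨n, rfl⟩ := Int.eq_ofNat_of_zero_le hn
  exact V_shift hc hv n

lemma mem_U (hc : IsCoTStructure C U V) {X : C} : X ∈ U ↔ ∀ v ∈ V, HZ X (v⟦(1 : ℤ)⟧) := by
  constructor
  · intro h v hv
    exact hc.orthogonal X h _ ⟨v, hv, ⟨Iso.refl _⟩⟩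
  · intro h
    obtain ⟨u, v, f, g, k, D, hu, ⟨v', hv', ⟨t⟩⟩⟩ := hc.exists_triangle X
    have hg : g = 0 := (h v' hv').iso_right t g
    obtain ⟨s, hs⟩ := DT.c2 D (𝟙 X) (by rw [hg, comp_zero])
    exact hc.smd_closed_ge ⟨u, hu, s, f, hs.symm⟩

/-- The metric attached to a co-t-structure. -/
def Rc (C : Type u) [Category.{v} C] [HasShift C ℤ] (U : Set C) (n : ℤ) : Set C :=
  {X | ∃ a ∈ U, Nonempty (X ≅ (shiftFunctor C (-n)).obj a)}

lemma Rc_eq (U : Set C) (n : ℤ) : Rc C U n = shiftSet C (-n) U := rfl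

lemma mem_Rc (hc : IsCoTStructure C U V) {X : C} {n : ℤ} :
    X ∈ Rc C U n ↔ ∀ v ∈ V, ∀ k ≥ 1 - n, HZ X (v⟦k⟧) := by
  constructor
  · rintro ⟨a, ha, ⟨t⟩⟩ v hv k hk
    refine HZ.iso_left ?_ t
    have := (mem_U hc).1 ha (v⟦k + n - 1⟧) (V_shift' hc hv _ (by lia))
    have := this.iso_right (shIso v (k + n - 1) 1 (k + n) (by lia)).symm
    exact hz_shift_r (k + n) (-n) k this (by lia)
  · intro h
    refine ⟨X⟦n⟧, ?_, ⟨(shIso0 X n (-n) (by lia)).symm⟩⟩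
    rw [mem_U hc]
    intro v hv
    exact hz_shift_r (1 - n) n 1 (h v hv _ le_rfl) (by lia)

lemma Rc_shift (hc : IsCoTStructure C U V) {X : C} {n : ℤ} (h : X ∈ Rc C U n) (j m : ℤ)
    (hm : m ≤ n - j) : X⟦j⟧ ∈ Rc C U m := by
  rw [mem_Rc hc] at h ⊢
  intro v hv k hk
  exact hz_shift_r (k - j) j k (h v hv _ (by lia)) (by lia)

lemma Rc_iso (hc : IsCoTStructure C U V) {X Y : C} {n : ℤ} (t : X ≅ Y) (h : X ∈ Rc C U n) :
    Y ∈ Rc C U n := by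
  rw [mem_Rc hc] at h ⊢
  exact fun v hv k hk => (h v hv k hk).iso_left t.symm

lemma orth_Rc (hc : IsCoTStructure C U V) : IsOrthMetric C (Rc C U) where
  zero_mem n X hX := (mem_Rc hc).2 fun v hv k hk => hz_zero_left hX
  iso_closed n X Y t hX := Rc_iso hc t hX
  star_subset := by
    rintro n Y ⟨X, Z, f, g, h, D, hX, hZ⟩
    rw [mem_Rc hc] at hX hZ ⊢
    exact fun v hv k hk => HZ.ext D (hX v hv k hk) (hZ v hv k hk)
  shift_one := by
    rintro n X ⟨a, ha, ⟨t⟩⟩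
    exact Rc_iso hc t.symm (Rc_shift hc ha 1 n (by lia))
  antitone := by
    intro n X hX
    rw [mem_Rc hc] at hX ⊢
    exact fun v hv k hk => hX v hv k (by lia)
  shift_neg_one := by
    rintro n X ⟨a, ha, ⟨t⟩⟩
    exact Rc_iso hc t.symm (Rc_shift hc ha (-1) n (by lia))
  orth := by
    intro n
    apply Set.Subset.antisymm
    · intro X hX
      rw [mem_Rc hc]
      intro v hv k hk
      exact hX _ fun a ha => (mem_Rc hc).1 ha v hv k hk
    · intro X hX w hw
      exact hw X hX

lemma U_eq_Rc (hc : IsCoTStructure C U V) {X : C} : X ∈ U ↔ X ∈ Rc C U 0 := by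
  constructor
  · intro h
    exact ⟨X, h, ⟨(shiftFunctorZero' C (-0 : ℤ) (by simp)).symm.app X⟩⟩
  · rintro ⟨a, ha, ⟨t⟩⟩
    exact hc.iso_closed_ge ((t ≪≫ (shiftFunctorZero' C (-0 : ℤ) (by simp)).app a).symm) ha

lemma ext_bound {Y : C} (h : extClosure C (sh G Set.univ) Y) :
    ∃ B : ℕ, extClosure C (sh G (Set.Icc (-B : ℤ) B)) Y := by
  induction h with
  | of h =>
    obtain ⟨j, -, t⟩ := h
    exact ⟨j.natAbs, extClosure.of ⟨j, ⟨by lia, by lia⟩, t⟩⟩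
  | zero h => exact ⟨0, extClosure.zero h⟩
  | ext f g k D _ _ h1 h2 =>
    obtain ⟨a, ha⟩ := h1
    obtain ⟨b, hb⟩ := h2
    refine ⟨a + b, extClosure.ext f g k D
      (extClosure_mono (fun u hu => extClosure.of (sh_mono G ?_ hu)) ha)
      (extClosure_mono (fun u hu => extClosure.of (sh_mono G ?_ hu)) hb)⟩ <;>
    · apply Set.Icc_subset_Icc <;> push_cast <;> lia

lemma gen_bound (hG : IsCompactGenerator C G) (hH : IsCompactObj C H) :
    ∃ B k : ℕ, bigClosure C (sh G (Set.Icc (-B : ℤ) B)) H ∧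
      GLen (sh G (Set.Icc (-B : ℤ) B)) k H := by
  obtain ⟨Y, hY, i, r, e⟩ := compact_mem_smd hG hH
  obtain ⟨B, hB⟩ := ext_bound hY
  obtain ⟨k, hk⟩ := GLen_ext hB
  exact ⟨B, k, bigClosure.retract i r e (ext_le_big hB), hk.retract i r e⟩

/-- The hypotheses on `H` in the definition of co-approximability. -/
structure CoHyp (H : C) (A : ℤ) (U V : Set C) : Prop where
  gen : IsCompactGenerator C H
  pos : 0 < A
  coT : IsCoTStructure C U V
  mem : (shiftFunctor C (-A)).obj H ∈ U
  van : homZero C (singletonShift C H A) U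

lemma CoHyp.mem' (h : CoHyp H A U V) {j i : ℤ} (hj : j + i ≤ -A) : H⟦j⟧ ∈ Rc C U i := by
  have := (U_eq_Rc h.coT).1 h.mem
  exact Rc_iso h.coT (shIso H (-A) (j + A) j (by lia)) (Rc_shift h.coT this _ _ (by lia))

lemma CoHyp.van' (h : CoHyp H A U V) {j i : ℤ} (hj : A ≤ j + i) {X : C} (hX : X ∈ Rc C U i) :
    HZ (H⟦j⟧) X := by
  have h1 : X⟦A - j⟧ ∈ U := by
    rw [U_eq_Rc h.coT]
    exact Rc_shift h.coT hX _ _ (by lia)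
  have h2 : HZ (H⟦A⟧) (X⟦A - j⟧) := h.van _ ⟨Iso.refl _⟩ _ h1
  exact hz_shift_l' j A (A - j) h2 (by lia)

lemma preApprox (hG : IsCompactGenerator C G) (h : CoHyp H A U V) {B : ℕ} {A' : ℤ}
    (hB : bigClosure C (sh H (Set.Icc (-B : ℤ) B)) G) (hA' : A + B ≤ A') :
    IsGPreApprox C (genSeqPos C G) (Rc C U) A' ∧
      ∀ n i : ℤ, A' ≤ n + i → homZero C (genSeqPos C G n) (Rc C U i) := by
  have hpos := h.pos
  have hvan : ∀ n i : ℤ, A' ≤ n + i → homZero C (genSeqPos C G n) (Rc C U i) := by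
    rintro n i hni a ⟨t⟩ X hX
    refine HZ.iso_left ?_ t
    have : HZ G (X⟦-n⟧) := by
      refine bigClosure_hz (sh_hz ?_) hB
      intro m hm
      exact h.van' (i := i + n) (by have := hm.1; lia) (Rc_shift h.coT hX _ _ (by lia))
    have := hz_shift_r (-n) n 0 this (by lia)
    exact this.iso_right ((shiftFunctorZero C ℤ).app X).symm
  refine ⟨⟨orth_Rc h.coT, by lia, ?_, ?_, ?_⟩, hvan⟩
  · rintro i X ⟨Y, hY, a, r, e⟩
    rw [Set.mem_iUnion₂]
    refine ⟨1, ?_, X⟦(-1 : ℤ)⟧, ⟨Y⟦(-1 : ℤ)⟧, ?_, a⟦(-1 : ℤ)⟧', r⟦(-1 : ℤ)⟧', ?_⟩,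
      ⟨(shIso0 X (-1) 1 (by lia)).symm⟩⟩
    · simp only [Set.mem_setOf_eq, abs_one]; lia
    · refine extClosure_shift (-1) ?_ hY
      intro u hu
      rw [unionIic_eq] at hu ⊢
      refine extClosure.of (sh_shift G _ ?_ hu)
      intro j hj
      simp only [Set.mem_Iic] at *; lia
    · rw [← Functor.map_comp, e, CategoryTheory.Functor.map_id]
  · intro i X hX
    constructor
    · rw [mem_Rc h.coT]
      intro v hv k hk
      rw [MG, gIic, unionIic_eq] at hX
      refine bigClosure_hz (sh_hz ?_) (smdExt_le_big hX)
      intro m hm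
      simp only [Set.mem_Iic] at hm
      have : HZ G (v⟦k - m⟧) := by
        refine bigClosure_hz (sh_hz ?_) hB
        intro j hj
        exact (mem_Rc h.coT).1 (h.mem' (i := i + m) (by have := hj.2; lia)) v hv _ (by lia)
      exact hz_shift_r (k - m) m k this (by lia)
    · obtain ⟨Y, hY, a, r, e⟩ := hX
      rw [unionIic_eq] at hY
      exact compact_retract (extClosure_compact (sh_compact hG _) hY) a r e
  · intro n
    exact ⟨A' - n, fun i hi => hvan n i (by lia)⟩

lemma TPlusC_shift (hc : IsCoTStructure C U V) {X : C} (hX : X ∈ TPlusC C U) (j : ℤ) :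
    X⟦j⟧ ∈ TPlusC C U := by
  rw [TPlusC, Set.mem_iInter] at hX ⊢
  intro n
  obtain ⟨K, D, k, d, c, T, hK, hD⟩ := hX (n + j)
  obtain ⟨k', d', c', T'⟩ := DT.shift T j
  exact ⟨_, _, k', d', c', T', compact_shift hK j, Rc_shift hc hD j n (by lia)⟩

lemma TPlusC_iso {X Y : C} (hX : X ∈ TPlusC C U) (t : X ≅ Y) :
    Y ∈ TPlusC C U := by
  rw [TPlusC, Set.mem_iInter] at hX ⊢
  intro n
  obtain ⟨K, D, k, d, c, T, hK, hD⟩ := hX n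
  exact ⟨_, _, _, _, _, DT.iso2 T t, hK, hD⟩

lemma approx_fwd (hc : IsCoTStructure C U V) {T S S' : Set C}
    (hT : ∀ X ∈ T, ∀ j : ℤ, X⟦j⟧ ∈ T) (i : ℤ) (hS : ∀ E ∈ S, E⟦-i⟧ ∈ S')
    (h : ∀ F ∈ U ∩ T, approxTriangle C F S (shiftSet C (-1) U ∩ T)) (F : C)
    (hF : F ∈ Rc C U i ∩ T) : approxTriangle C F S' (Rc C U (i + 1) ∩ T) := by
  obtain ⟨E, D, f, g, k, H, hE, hD⟩ := h (F⟦i⟧)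
    ⟨(U_eq_Rc hc).2 (Rc_shift hc hF.1 i 0 (by lia)), hT _ hF.2 i⟩
  obtain ⟨f', g', k', H'⟩ := DT.shift H (-i)
  exact ⟨_, _, _, _, _, DT.iso2 H' (shIso0 F i (-i) (by lia)), hS E hE,
    Rc_shift hc (n := 1) hD.1 (-i) (i + 1) (by lia), hT _ hD.2 _⟩

lemma big_transfer {B : ℕ} (hB : bigClosure C (sh G (Set.Icc (-B : ℤ) B)) H) {A A' : ℤ}
    (hA' : A + B ≤ A') (i : ℤ) : ∀ E ∈ gBarInt C (genSeqPos C H) (-A) A,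
      E⟦-i⟧ ∈ gBarInt C (genSeqPos C G) (-A' - i) (A' - i) := by
  intro E hE
  rw [gBarInt_eq] at hE ⊢
  refine bigClosure_shift (-i) ?_ hE
  rintro u ⟨j, ⟨hj, hj'⟩, ⟨t⟩⟩
  refine bigClosure_iso ((shiftFunctor C (-i)).mapIso t ≪≫ shIso H j (-i) (j - i) (by lia)).symm ?_
  refine bigClosure_shift (j - i) ?_ hB
  intro u hu
  refine bigClosure.of (sh_shift G _ ?_ hu)
  rintro m ⟨hm, hm'⟩
  exact ⟨by lia, by lia⟩

lemma pow_transfer {B l : ℕ} (hB : GLen (sh G (Set.Icc (-B : ℤ) B)) l H) {A A' : ℤ}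
    (hA' : A + B ≤ A') (hA2 : A.toNat * l ≤ A'.toNat) (i : ℤ) :
    ∀ E ∈ gBarIntPow C (genSeqPos C H) (-A) A A,
      E⟦-i⟧ ∈ gBarIntPow C (genSeqPos C G) (-A' - i) (A' - i) A' := by
  intro E hE
  rw [gBarIntPow, unionIcc_eq] at hE
  rw [gBarIntPow_eq]
  refine GLen.mono subset_rfl hA2 (GLen_smd_shift (-i) ?_ _ hE)
  rintro u ⟨j, ⟨hj, hj'⟩, ⟨t⟩⟩
  refine GLen.iso ?_ ((shiftFunctor C (-i)).mapIso t ≪≫ shIso H j (-i) (j - i) (by lia))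
  refine GLen_sh_shift G (j - i) ?_ hB
  rintro m ⟨hm, hm'⟩
  exact ⟨by lia, by lia⟩

lemma exists_const (hG : IsCompactGenerator C G) (h : CoHyp H A U V) :
    ∃ A' : ℤ, (IsGPreApprox C (genSeqPos C G) (Rc C U) A' ∧
      ∀ n i : ℤ, A' ≤ n + i → homZero C (genSeqPos C G n) (Rc C U i)) ∧
      (∀ i : ℤ, ∀ E ∈ gBarInt C (genSeqPos C H) (-A) A,
        E⟦-i⟧ ∈ gBarInt C (genSeqPos C G) (-A' - i) (A' - i)) ∧
      (∀ i : ℤ, ∀ E ∈ gBarIntPow C (genSeqPos C H) (-A) A A,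
        E⟦-i⟧ ∈ gBarIntPow C (genSeqPos C G) (-A' - i) (A' - i) A') := by
  obtain ⟨B, k, hB, hk⟩ := gen_bound hG h.gen.1
  obtain ⟨B', k', hB', -⟩ := gen_bound h.gen hG.1
  have hpos := h.pos
  obtain ⟨a, rfl⟩ := Int.eq_ofNat_of_zero_le h.pos.le
  refine ⟨((a + B + B' + a * k : ℕ) : ℤ), preApprox hG h hB' ?_, big_transfer hB ?_,
    pow_transfer hk ?_ ?_⟩
  · push_cast; nlinarith
  · push_cast; nlinarith
  · push_cast; nlinarith
  · simp only [Int.toNat_natCast]; lia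

lemma approxTriangle_mono {F : C} {S S' D D' : Set C} (hS : S ⊆ S') (hD : D ⊆ D')
    (h : approxTriangle C F S D) : approxTriangle C F S' D' := by
  obtain ⟨E, Dd, f, g, k, H, hE, hDd⟩ := h
  exact ⟨E, Dd, f, g, k, H, hS hE, hD hDd⟩

lemma pow_le_big (G : C) (a b k : ℤ) :
    gBarIntPow C (genSeqPos C G) a b k ⊆ gBarInt C (genSeqPos C G) a b := by
  rw [gBarInt_eq, gBarIntPow_eq]
  exact fun X hX => (apprClass_pow G).big hX

end fwd

lemma isTri_univ : IsTri (Set.univ : Set C) where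
  ext _ _ _ := trivial
  s1 _ := trivial
  s1' _ := trivial

lemma main_thm (G₀ : C) (hgen : IsCompactGenerator C G₀) :
    IsGenSeq C (genSeqPos C G₀) ∧
    (WeaklyCoApproximable C ↔
      ∃ (Rm : ℤ → Set C) (A : ℤ), IsWeakGApprox C (genSeqPos C G₀) Rm A) ∧
    (CoApproximable C ↔
      ∃ (Rm : ℤ → Set C) (A : ℤ), IsGApprox C (genSeqPos C G₀) Rm A) ∧
    (WeaklyCoQuasiApproximable C ↔
      ∃ (Rm : ℤ → Set C) (A : ℤ), IsWeakGQuasiApprox C (genSeqPos C G₀) Rm A) ∧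
    (CoQuasiApproximable C ↔
      ∃ (Rm : ℤ → Set C) (A : ℤ), IsGQuasiApprox C (genSeqPos C G₀) Rm A) := by
  have hT0 : ∀ X ∈ (Set.univ : Set C), ∀ j : ℤ, X⟦j⟧ ∈ (Set.univ : Set C) := fun _ _ _ => trivial
  refine ⟨isGenSeq hgen, ⟨?_, ?_⟩, ⟨?_, ?_⟩, ⟨?_, ?_⟩, ⟨?_, ?_⟩⟩
  · rintro ⟨H, A, U, V, h1, h2, h3, h4, h5, h6⟩
    obtain ⟨A', ⟨hP, hv⟩, hb, -⟩ := exists_const hgen ⟨h1, h2, h3, h4, h5⟩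
    refine ⟨Rc C U, A', hP, hv, fun i F hF => ?_⟩
    have := approx_fwd h3 hT0 i (hb i) (fun F hF => by simpa using h6 F hF.1) F ⟨hF, trivial⟩
    simpa using this
  · rintro ⟨Rm, A, hP, hv, hA⟩
    obtain ⟨A', h1, h2, h3, h4⟩ := back hgen (apprClass_big G₀) hP hv isTri_univ (by
      intro i F hF
      have := hA i F hF.1
      rw [gBarInt_eq] at this
      simpa [approxTriangle, DT] using this)
    refine ⟨G₀, A', _, _, hgen, h1, coT hgen.1, h2, h3, fun F hF => ?_⟩
    have := h4 F ⟨hF, trivial⟩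
    rw [gBarInt_eq]
    simpa [approxTriangle, DT] using this
  · rintro ⟨H, A, U, V, h1, h2, h3, h4, h5, h6⟩
    obtain ⟨A', ⟨hP, hv⟩, -, hb⟩ := exists_const hgen ⟨h1, h2, h3, h4, h5⟩
    have key : ∀ i : ℤ, ∀ F ∈ Rc C U i, approxTriangle C F
        (gBarIntPow C (genSeqPos C G₀) (-A' - i) (A' - i) A') (Rc C U (i + 1)) := by
      intro i F hF
      have := approx_fwd h3 hT0 i (hb i) (fun F hF => by simpa using h6 F hF.1) F ⟨hF, trivial⟩
      simpa using this
    exact ⟨Rc C U, A', ⟨hP, hv, fun i F hF =>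
      approxTriangle_mono (pow_le_big _ _ _ _) subset_rfl (key i F hF)⟩, key⟩
  · rintro ⟨Rm, A, ⟨hP, hv, -⟩, hA⟩
    obtain ⟨A', h1, h2, h3, h4⟩ := back hgen (apprClass_pow G₀) hP hv isTri_univ (by
      intro i F hF
      have := hA i F hF.1
      rw [gBarIntPow_eq] at this
      simpa [approxTriangle, DT] using this)
    refine ⟨G₀, A', _, _, hgen, h1, coT hgen.1, h2, h3, fun F hF => ?_⟩
    have := h4 F ⟨hF, trivial⟩
    rw [gBarIntPow_eq]
    simpa [approxTriangle, DT] using this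
  · rintro ⟨H, A, U, V, h1, h2, h3, h4, h5, h6⟩
    obtain ⟨A', ⟨hP, hv⟩, hb, -⟩ := exists_const hgen ⟨h1, h2, h3, h4, h5⟩
    exact ⟨Rc C U, A', hP, hv, fun i F hF =>
      approx_fwd h3 (fun X hX j => TPlusC_shift h3 hX j) i (hb i) h6 F hF⟩
  · rintro ⟨Rm, A, hP, hv, hA⟩
    have hT := isTri_clos hP.orthMetric
      (fun K hK => hvan hgen hP.orthMetric.toIsExtGoodMetric hv hK)
    have hA' : HApp (fun P _ X => bigClosure C (sh G₀ P) X) Rm (closCompacts C Rm) A := by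
      intro i F hF
      have := hA i F hF
      rw [gBarInt_eq] at this
      exact this
    obtain ⟨A', h1, h2, h3, h4⟩ := back hgen (apprClass_big G₀) hP hv hT hA'
    rw [clos_eq hgen (apprClass_big G₀) hP hv hA'] at h4
    refine ⟨G₀, A', _, _, hgen, h1, coT hgen.1, h2, h3, fun F hF => ?_⟩
    rw [gBarInt_eq]
    exact h4 F hF
  · rintro ⟨H, A, U, V, h1, h2, h3, h4, h5, h6⟩
    obtain ⟨A', ⟨hP, hv⟩, -, hb⟩ := exists_const hgen ⟨h1, h2, h3, h4, h5⟩
    have key := fun (i : ℤ) (F : C) hF =>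
      approx_fwd h3 (fun X hX j => TPlusC_shift h3 hX j) i (hb i) h6 F hF
    exact ⟨Rc C U, A', ⟨hP, hv, fun i F hF =>
      approxTriangle_mono (pow_le_big _ _ _ _) subset_rfl (key i F hF)⟩, key⟩
  · rintro ⟨Rm, A, ⟨hP, hv, -⟩, hA⟩
    have hT := isTri_clos hP.orthMetric
      (fun K hK => hvan hgen hP.orthMetric.toIsExtGoodMetric hv hK)
    have hA' : HApp (fun P k X => GLen (sh G₀ P) k X) Rm (closCompacts C Rm) A := by
      intro i F hF
      have := hA i F hF
      rw [gBarIntPow_eq] at this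
      exact this
    obtain ⟨A', h1, h2, h3, h4⟩ := back hgen (apprClass_pow G₀) hP hv hT hA'
    rw [clos_eq hgen (apprClass_pow G₀) hP hv hA'] at h4
    refine ⟨G₀, A', _, _, hgen, h1, coT hgen.1, h2, h3, fun F hF => ?_⟩
    rw [gBarIntPow_eq]
    exact h4 F hF


end

theorem statement_14 (G₀ : C)
    (hcg : CompactlyGenerated C) (hgen : IsCompactGenerator C G₀) :
    IsGenSeq C (genSeqPos C G₀) ∧
    (WeaklyCoApproximable C ↔
      ∃ (Rm : ℤ → Set C) (A : ℤ), IsWeakGApprox C (genSeqPos C G₀) Rm A) ∧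
    (CoApproximable C ↔
      ∃ (Rm : ℤ → Set C) (A : ℤ), IsGApprox C (genSeqPos C G₀) Rm A) ∧
    (WeaklyCoQuasiApproximable C ↔
      ∃ (Rm : ℤ → Set C) (A : ℤ), IsWeakGQuasiApprox C (genSeqPos C G₀) Rm A) ∧
    (CoQuasiApproximable C ↔
      ∃ (Rm : ℤ → Set C) (A : ℤ), IsGQuasiApprox C (genSeqPos C G₀) Rm A) := by
  exact main_thm G₀ hgen

end GApprox
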